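/- arXiv:1312.1587 — 9 statements merged into one kernel-verified Lean document; each statement's English description precedes it below -/
import Mathlib

section
/- Let M be a symmetric positive definite n×n real matrix, let V : ℝⁿ → ℝ and μ : ℝⁿ → ℝ^{m×n} be twice continuously differentiable, and assume C(q) = μ(q) M⁻¹ μ(q)ᵀ is invertible for every q ∈ ℝⁿ. Let T > 0 and let (q(t), p(t)) be a C¹ solution on [0, T] of the constrained Hamiltonian system q̇ = M⁻¹ p, ṗ = −V_q(q) − μ(q)ᵀ C(q)⁻¹ ( μ_q(q)[M⁻¹p, M⁻¹p] − μ(q) M⁻¹ V_q(q) ), whose initial condition satisfies μ(q(0)) M⁻¹ p(0) = 0. For a time step h > 0 define the nonholonomic Euler A discrete trajectory by q_0 = q(0), p_{−1/2} = p(0), and for k ≥ 0: p_{k+1/2} = p_{k−1/2} − h V_q(q_k) − 2 μ(q_k)ᵀ C(q_k)⁻¹ μ(q_k) M⁻¹ p_{k−1/2} and q_{k+1} = q_k + h M⁻¹ p_{k+1/2}. Then the method is globally first-order convergent: there exist constants K > 0 and h₀ > 0 such that for all 0 < h ≤ h₀ and all integers k ≥ 0 with k·h ≤ T one has ‖q_k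 − q(k·h)‖ ≤ K·h. -/
/-!
Write `Π(x) = μᵀ (μ M⁻¹ μᵀ)⁻¹ μ M⁻¹` for the `M⁻¹`-orthogonal projection onto the range of `μ(x)ᵀ`
and `F = μᵀ C⁻¹ (μ_q[v, v] - μ M⁻¹ V_q)` for the constraint force, so that `p' = -V_q - F`. The
scheme is `P_{k+1} = (1 - 2Π(Q_k)) P_k - h V_q(Q_k)`, `Q_{k+1} = Q_k + h M⁻¹ P_{k+1}`.

The momentum update contains a reflection, which is not close to the identity, so a direct
comparison of `P_k` with `p(t_k)` loses a power of `h`. The remedy is to compare `P_k` with the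
shadow momentum `(1 - Π(Q_k)) p(t_k) + (h/2) F(t_k)`. The reflection at `Q_k` fixes the first
summand exactly, and sends `F(t_k)`, which lies in the range of `Π(q(t_k))`, to `-F(t_k)` up to the
position error; the defect of the shadow momentum is thereby `O(h)` times (error plus `h`). The one
delicate term is the increment of `(Π(Q_k) - Π(q(t_k))) p(t_k)` over a step, which is a second
difference of the `C²` map `Π` (`exists_second_difference_bound`). This is `defect_step`.

The reflections are isometries for `√(xᵀ M⁻¹ x)` (`reflection_isometry`, `exists_kinetic_norm`), so
in this norm the error grows by a factor `1 + O(h)` per step, and a discrete Grönwall argument,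
which at the same time keeps `Q_k` in a fixed ball (`bootstrap_gronwall`), gives the `O(h)` bound
in `reflected_euler_convergent`. That the solution satisfies `Π(q) p = 0` at all times is
`constraint_preserved`.
-/

open Matrix

/-- The continuous linear functional on `ℝⁿ` given by dot product with `w`;
used to express gradients of scalar functions. -/
noncomputable def vecCLM {n : ℕ} (w : Fin n → ℝ) : (Fin n → ℝ) →L[ℝ] ℝ :=
  ∑ i, w i • ContinuousLinearMap.proj (R := ℝ) (φ := fun _ : Fin n => ℝ) i

/-! ### Analytic estimates -/

lemma exists_lipschitz_bound_of_contDiff {E F : Type*} [NormedAddCommGroup E] [NormedSpace ℝ E]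
    [FiniteDimensional ℝ E] [NormedAddCommGroup F] [NormedSpace ℝ F]
    {f : E → F} (hf : ContDiff ℝ 1 f) (ρ : ℝ) :
    ∃ C : ℝ, 0 ≤ C ∧ ∀ x, ‖x‖ ≤ ρ → ‖f x‖ ≤ C ∧ ∀ y, ‖y‖ ≤ ρ → ‖f x - f y‖ ≤ C * ‖x - y‖ := by
  have : ProperSpace E := FiniteDimensional.proper ℝ E
  have hK : IsCompact (Metric.closedBall (0 : E) ρ) := isCompact_closedBall 0 ρ
  obtain ⟨C₁, h₁⟩ := hK.exists_bound_of_continuousOn hf.continuous.continuousOn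
  obtain ⟨C₂, h₂⟩ := hK.exists_bound_of_continuousOn
    (hf.continuous_fderiv one_ne_zero).continuousOn
  refine ⟨max 0 (max C₁ C₂), le_max_left _ _, fun x hx => ⟨?_, fun y hy => ?_⟩⟩
  · exact (h₁ x (by simpa using hx)).trans ((le_max_left _ _).trans (le_max_right _ _))
  · have := (convex_closedBall (0 : E) ρ).norm_image_sub_le_of_norm_fderiv_le (𝕜 := ℝ) (f := f)
      (fun z _ => (hf.differentiable one_ne_zero) z) h₂ (x := y) (y := x)
      (by simpa using hy) (by simpa using hx)
    exact this.trans (by gcongr; exact (le_max_right _ _).trans (le_max_right _ _))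

/-- Bound for mixed second differences of a `C²` map on a ball: linear in the shift `d` and in
the displacement `y - x` at once. -/
lemma exists_second_difference_bound {E F : Type*} [NormedAddCommGroup E] [NormedSpace ℝ E]
    [FiniteDimensional ℝ E] [NormedAddCommGroup F] [NormedSpace ℝ F]
    {f : E → F} (hf : ContDiff ℝ 2 f) (ρ : ℝ) :
    ∃ C : ℝ, 0 ≤ C ∧ ∀ x y d, ‖x‖ ≤ ρ → ‖y‖ ≤ ρ → ‖x + d‖ ≤ ρ → ‖y + d‖ ≤ ρ →
      ‖(f (y + d) - f y) - (f (x + d) - f x)‖ ≤ C * ‖d‖ * ‖y - x‖ := by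
  have hf' : ContDiff ℝ 1 (fderiv ℝ f) := hf.fderiv_right (by norm_num)
  obtain ⟨C, hC0, hC⟩ := exists_lipschitz_bound_of_contDiff hf' ρ
  refine ⟨C, hC0, fun x y d hx hy hxd hyd => ?_⟩
  have hdiff : Differentiable ℝ f := hf.differentiable two_ne_zero
  -- Mean value inequality for `z ↦ f (z + d) - f z` on the points staying in the ball under the
  -- shift by `d`.
  have hconv : Convex ℝ
      (Metric.closedBall (0 : E) ρ ∩ (fun z => z + d) ⁻¹' Metric.closedBall (0 : E) ρ) :=
    (convex_closedBall (0 : E) ρ).inter ((convex_closedBall (0 : E) ρ).translate_preimage_left d)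
  refine hconv.norm_image_sub_le_of_norm_hasFDerivWithin_le (𝕜 := ℝ)
    (f := fun z => f (z + d) - f z) (f' := fun z => fderiv ℝ f (z + d) - fderiv ℝ f z)
    (fun z _ => ?_) (fun z hz => ?_) ⟨by simpa using hx, mem_closedBall_zero_iff.2 hxd⟩
    ⟨by simpa using hy, mem_closedBall_zero_iff.2 hyd⟩
  · have h1 : HasFDerivAt (fun z => f (z + d)) (fderiv ℝ f (z + d)) z :=
      (hasFDerivAt_comp_add_right d).2 (hdiff (z + d)).hasFDerivAt
    exact (h1.sub (hdiff z).hasFDerivAt).hasFDerivWithinAt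
  · have := (hC (z + d) (mem_closedBall_zero_iff.1 hz.2)).2 z (by simpa using hz.1)
    simpa using this

lemma taylor_of_lipschitz_deriv {F : Type*} [NormedAddCommGroup F] [NormedSpace ℝ F]
    {T C : ℝ} {f f' : ℝ → F} (hf : ∀ t ∈ Set.Icc (0 : ℝ) T, HasDerivAt f (f' t) t)
    (hf' : ∀ s ∈ Set.Icc (0 : ℝ) T, ∀ t ∈ Set.Icc (0 : ℝ) T, ‖f' s - f' t‖ ≤ C * |s - t|)
    (hC : 0 ≤ C) {t h : ℝ} (ht : 0 ≤ t) (hh : 0 ≤ h) (hth : t + h ≤ T) :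
    ‖f (t + h) - f t - h • f' t‖ ≤ C * h ^ 2 := by
  have key := (convex_Icc t (t + h)).norm_image_sub_le_of_norm_hasDerivWithin_le
    (f := fun s => f s - s • f' t) (f' := fun s => f' s - f' t) (C := C * h)
    (x := t) (y := t + h)
    (fun s hs => by
      have h1 := hf s ⟨ht.trans hs.1, hs.2.trans hth⟩
      have h2 : HasDerivAt (fun s : ℝ => s • f' t) (f' t) s := by
        simpa using (hasDerivAt_id s).smul_const (f' t)
      exact (h1.sub h2).hasDerivWithinAt)
    (fun s hs => by
      refine (hf' s ⟨ht.trans hs.1, hs.2.trans hth⟩ t ⟨ht, by linarith⟩).trans ?_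
      rw [abs_of_nonneg (by linarith [hs.1])]
      gcongr
      linarith [hs.2])
    ⟨le_rfl, by linarith⟩ ⟨by linarith, le_rfl⟩
  have e : f (t + h) - f t - h • f' t
      = (f (t + h) - (t + h) • f' t) - (f t - t • f' t) := by
    rw [add_smul]; abel
  rw [e]
  refine key.trans (le_of_eq ?_)
  rw [add_sub_cancel_left, Real.norm_eq_abs, abs_of_nonneg hh]; ring

/-- Discrete Grönwall inequality whose one-step bound is available only while `a k ≤ 1`; smallness
of the resulting bound keeps the sequence in that range. -/
lemma bootstrap_gronwall {a : ℕ → ℝ} {L h T : ℝ} (hL : 0 ≤ L) (hh : 0 ≤ h)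
    (hsmall : (a 0 + h) * Real.exp (L * T) ≤ 1) (ha : 0 ≤ a 0)
    (hstep : ∀ k : ℕ, ((k + 1 : ℕ) : ℝ) * h ≤ T → a k ≤ 1 → a (k + 1) ≤ a k + L * h * (a k + h)) :
    ∀ k : ℕ, (k : ℝ) * h ≤ T → a k ≤ (a 0 + h) * Real.exp (L * T) := by
  have main : ∀ k : ℕ, (k : ℝ) * h ≤ T → a k + h ≤ (a 0 + h) * Real.exp (L * (k * h)) := by
    intro k
    induction k with
    | zero => intro _; simp
    | succ k ih =>
      intro hk
      have hk' : (k : ℝ) * h ≤ T := by push_cast at hk; nlinarith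
      have h1 := ih hk'
      have h2 : (a 0 + h) * Real.exp (L * (k * h)) ≤ (a 0 + h) * Real.exp (L * T) := by gcongr
      have h3 := hstep k hk (by linarith)
      have e : L * (((k + 1 : ℕ) : ℝ) * h) = L * (k * h) + L * h := by push_cast; ring
      rw [e, Real.exp_add, ← mul_assoc]
      have h4 : 1 + L * h ≤ Real.exp (L * h) := by linarith [Real.add_one_le_exp (L * h)]
      calc a (k + 1) + h ≤ (a k + h) * (1 + L * h) := by linarith
        _ ≤ ((a 0 + h) * Real.exp (L * (k * h))) * (1 + L * h) := by gcongr
        _ ≤ _ := by gcongr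
  intro k hk
  have h1 := main k hk
  have h2 : (a 0 + h) * Real.exp (L * (k * h)) ≤ (a 0 + h) * Real.exp (L * T) := by gcongr
  linarith

/-! ### Convergence of the abstract reflected scheme -/

set_option maxHeartbeats 1000000 in
/-- Error propagation over one step. Index `0` is the old time, `1` the new time; `AQ0`, `AQ1`,
`A0`, `A1` are the projections at `Q0`, `Q1`, `q0`, `q1`, and `Am` is the projection at the
intermediate point `q1 + (Q0 - q0)`. The momentum error is measured against
`p - AQ p + (h / 2) • F`, the exact momentum projected onto the constraint at the *numerical*
position and corrected by half an impulse of the constraint force. Up to a remainder which is `h`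
times the current error plus `h`, it is transported by the reflection `1 - 2 AQ0`. The bound on the
position error comes first, since it is what places `Q1` in the region where the two premises of
the second part can be verified. -/
lemma defect_step {E : Type*} [NormedAddCommGroup E] [NormedSpace ℝ E]
    {A0 A1 W : E →L[ℝ] E}
    {AQ0 AQ1 Am : E →L[ℝ] E} {q0 q1 p0 p1 F0 F1 g0 gQ0 Q0 Q1 P0 P1 : E} {h C : ℝ}
    (hC : 1 ≤ C) (hh : 0 ≤ h)
    (hproj : ∀ y, AQ0 (AQ0 y) = AQ0 y) (hAp0 : A0 p0 = 0) (hAp1 : A1 p1 = 0) (hAF : A0 F0 = F0)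
    (hP : P1 = P0 - h • gQ0 - (2 : ℝ) • AQ0 P0) (hQ : Q1 = Q0 + h • W P1)
    (bW : ‖W‖ ≤ C) (bA : ‖AQ0‖ ≤ C) (bp0 : ‖p0‖ ≤ C) (bp1 : ‖p1‖ ≤ C) (bF0 : ‖F0‖ ≤ C)
    (bg : ‖gQ0‖ ≤ C) (lA : ‖AQ0 - A0‖ ≤ C * ‖Q0 - q0‖) (lg : ‖gQ0 - g0‖ ≤ C * ‖Q0 - q0‖)
    (lF : ‖F1 - F0‖ ≤ C * h) (lp : ‖p1 - p0‖ ≤ C * h)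
    (tq : ‖q1 - q0 - h • W p0‖ ≤ C * h ^ 2)
    (tp : ‖p1 - p0 - h • (-g0 - F0)‖ ≤ C * h ^ 2) :
    ‖(Q1 - q1) - (Q0 - q0)‖ ≤ 4 * C ^ 3 * h *
        (‖P0 - (p0 - AQ0 p0 + (h / 2) • F0)‖ + ‖Q0 - q0‖ + h) ∧
    (‖AQ1 - Am‖ ≤ C * ‖(Q1 - q1) - (Q0 - q0)‖ →
      ‖(Am - A1) - (AQ0 - A0)‖ ≤ C * ‖Q0 - q0‖ * (C * h) →
      ∃ r : E, P1 - (p1 - AQ1 p1 + (h / 2) • F1) =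
          ((P0 - (p0 - AQ0 p0 + (h / 2) • F0))
            - (2 : ℝ) • AQ0 (P0 - (p0 - AQ0 p0 + (h / 2) • F0))) + r ∧
        ‖r‖ ≤ 10 * C ^ 5 * h * (‖P0 - (p0 - AQ0 p0 + (h / 2) • F0)‖ + ‖Q0 - q0‖ + h)) := by
  set ε := P0 - (p0 - AQ0 p0 + (h / 2) • F0) with hε
  set d := ‖Q0 - q0‖ with hd
  have hd0 : 0 ≤ d := norm_nonneg _
  have hε0 : 0 ≤ ‖ε‖ := norm_nonneg _
  have hC0 : 0 ≤ C := by linarith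
  set X := ‖ε‖ + d + h with hX
  have hX0 : 0 ≤ X := by positivity
  have hhX : h ≤ X := by linarith
  have hdX : d ≤ X := by linarith
  have hP0 : P0 = ε + (p0 - AQ0 p0 + (h / 2) • F0) := by rw [hε]; abel
  have hC2 : C ≤ C ^ 2 := by nlinarith
  have hC3 : C ^ 2 ≤ C ^ 3 := pow_le_pow_right₀ hC (by norm_num)
  have hC4 : C ^ 3 ≤ C ^ 4 := pow_le_pow_right₀ hC (by norm_num)
  have hC5 : C ^ 4 ≤ C ^ 5 := pow_le_pow_right₀ hC (by norm_num)
  -- The reflection `1 - 2 AQ0` fixes `p0 - AQ0 p0`, so only `ε` and `O(h)` terms are reflected.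
  have hP1 : P1 - p0 = (ε - (2 : ℝ) • AQ0 ε) + (-((AQ0 - A0) p0)
      + ((h / 2) • (F0 - (2 : ℝ) • AQ0 F0) + -(h • gQ0))) := by
    rw [hP, hP0]
    simp only [map_add, map_sub, map_smul, hproj, _root_.sub_apply, hAp0]
    module
  have b1 : ‖ε - (2 : ℝ) • AQ0 ε‖ ≤ 3 * C ^ 2 * ‖ε‖ := by
    have := AQ0.le_of_opNorm_le bA ε
    calc ‖ε - (2 : ℝ) • AQ0 ε‖ ≤ ‖ε‖ + ‖(2 : ℝ) • AQ0 ε‖ := norm_sub_le _ _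
      _ = ‖ε‖ + 2 * ‖AQ0 ε‖ := by rw [norm_smul]; norm_num
      _ ≤ ‖ε‖ + 2 * (C * ‖ε‖) := by gcongr
      _ = (1 + 2 * C) * ‖ε‖ := by ring
      _ ≤ _ := by gcongr; nlinarith
  have b2 : ‖(AQ0 - A0) p0‖ ≤ C ^ 2 * d := by
    calc _ ≤ (C * d) * ‖p0‖ := (AQ0 - A0).le_of_opNorm_le lA p0
      _ ≤ (C * d) * C := by gcongr
      _ = _ := by ring
  have b3 : ‖(h / 2) • (F0 - (2 : ℝ) • AQ0 F0)‖ ≤ (3 / 2) * C ^ 2 * h := by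
    have h1 : ‖AQ0 F0‖ ≤ C * C := (AQ0.le_of_opNorm_le bA F0).trans (by gcongr)
    have h2 : ‖F0 - (2 : ℝ) • AQ0 F0‖ ≤ 3 * C ^ 2 := by
      calc _ ≤ ‖F0‖ + ‖(2 : ℝ) • AQ0 F0‖ := norm_sub_le _ _
        _ = ‖F0‖ + 2 * ‖AQ0 F0‖ := by rw [norm_smul]; norm_num
        _ ≤ _ := by nlinarith
    rw [norm_smul, Real.norm_of_nonneg (by positivity)]
    nlinarith
  have b4 : ‖h • gQ0‖ ≤ C ^ 2 * h := by
    rw [norm_smul, Real.norm_of_nonneg hh]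
    nlinarith
  have bP1 : ‖P1 - p0‖ ≤ 3 * C ^ 2 * X := by
    rw [hP1]
    have t1 := norm_add_le (ε - (2 : ℝ) • AQ0 ε) (-((AQ0 - A0) p0)
      + ((h / 2) • (F0 - (2 : ℝ) • AQ0 F0) + -(h • gQ0)))
    have t2 := norm_add_le (-((AQ0 - A0) p0)) ((h / 2) • (F0 - (2 : ℝ) • AQ0 F0) + -(h • gQ0))
    have t3 := norm_add_le ((h / 2) • (F0 - (2 : ℝ) • AQ0 F0)) (-(h • gQ0))
    rw [norm_neg] at t2 t3
    have hCd : 0 ≤ C ^ 2 * d := by positivity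
    have hCh : 0 ≤ C ^ 2 * h := by positivity
    have : 3 * C ^ 2 * X = 3 * C ^ 2 * ‖ε‖ + 3 * (C ^ 2 * d) + 3 * (C ^ 2 * h) := by
      rw [hX]; ring
    linarith
  have bd : ‖(Q1 - q1) - (Q0 - q0)‖ ≤ 4 * C ^ 3 * h * X := by
    have e : (Q1 - q1) - (Q0 - q0) = h • W (P1 - p0) - (q1 - q0 - h • W p0) := by
      rw [hQ, map_sub]; module
    rw [e]
    have t1 : ‖h • W (P1 - p0)‖ ≤ h * (C * (3 * C ^ 2 * X)) := by
      rw [norm_smul, Real.norm_of_nonneg hh]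
      gcongr
      exact (W.le_of_opNorm_le bW _).trans (by gcongr)
    have t2 : C * h ^ 2 ≤ C ^ 3 * h * X := by
      calc C * h ^ 2 = C * h * h := by ring
        _ ≤ C ^ 3 * h * X := by gcongr; linarith
    have t3 := norm_sub_le (h • W (P1 - p0)) (q1 - q0 - h • W p0)
    have : h * (C * (3 * C ^ 2 * X)) = 3 * C ^ 3 * h * X := by ring
    linarith
  refine ⟨bd, fun l1 l2 => ⟨_, (add_sub_cancel _ _).symm, ?_⟩⟩
  -- The second-order difference `(Am - A1) - (AQ0 - A0)` isolates the change of the projection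
  -- error over one step, which is `O(h)` times the position error.
  have e : P1 - (p1 - AQ1 p1 + (h / 2) • F1) - (ε - (2 : ℝ) • AQ0 ε) =
      -(p1 - p0 - h • (-g0 - F0)) + (AQ1 - Am) p1 + ((Am - A1) - (AQ0 - A0)) p1
      + (AQ0 - A0) (p1 - p0) - (h / 2) • (F1 - F0) - h • (AQ0 - A0) F0 - h • (gQ0 - g0) := by
    have : P1 = (P1 - p0) + p0 := by abel
    rw [this, hP1]
    simp only [map_sub, _root_.sub_apply, hAp0, hAp1, hAF]
    module
  rw [e]
  have c2 : ‖(AQ1 - Am) p1‖ ≤ 4 * C ^ 5 * h * X := by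
    calc _ ≤ (C * (4 * C ^ 3 * h * X)) * ‖p1‖ :=
          (AQ1 - Am).le_of_opNorm_le (l1.trans (by gcongr)) p1
      _ ≤ (C * (4 * C ^ 3 * h * X)) * C := by gcongr
      _ = _ := by ring
  have hmono : ∀ j ≤ 5, C ^ j * h * X ≤ C ^ 5 * h * X := fun j hj => by gcongr
  have c1 : C * h ^ 2 ≤ C ^ 5 * h * X := by
    calc C * h ^ 2 = C ^ 1 * h * h := by ring
      _ ≤ C ^ 1 * h * X := by gcongr
      _ ≤ _ := hmono 1 (by norm_num)
  have c3 : ‖((Am - A1) - (AQ0 - A0)) p1‖ ≤ C ^ 5 * h * X := by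
    calc _ ≤ (C * d * (C * h)) * ‖p1‖ := ContinuousLinearMap.le_of_opNorm_le _ l2 p1
      _ ≤ (C * X * (C * h)) * C := by gcongr
      _ = C ^ 3 * h * X := by ring
      _ ≤ _ := hmono 3 (by norm_num)
  have c4 : ‖(AQ0 - A0) (p1 - p0)‖ ≤ C ^ 5 * h * X := by
    calc _ ≤ (C * d) * ‖p1 - p0‖ := ContinuousLinearMap.le_of_opNorm_le _ lA _
      _ ≤ (C * X) * (C * h) := by gcongr
      _ = C ^ 2 * h * X := by ring
      _ ≤ _ := hmono 2 (by norm_num)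
  have c5 : ‖(h / 2) • (F1 - F0)‖ ≤ C ^ 5 * h * X := by
    rw [norm_smul, Real.norm_of_nonneg (by positivity)]
    calc _ ≤ h * (C * X) := by
          have : C * h ≤ C * X := by gcongr
          have : 0 ≤ ‖F1 - F0‖ := norm_nonneg _
          nlinarith
      _ = C ^ 1 * h * X := by ring
      _ ≤ _ := hmono 1 (by norm_num)
  have c6 : ‖h • (AQ0 - A0) F0‖ ≤ C ^ 5 * h * X := by
    rw [norm_smul, Real.norm_of_nonneg hh]
    calc _ ≤ h * ((C * d) * ‖F0‖) := by
          gcongr; exact ContinuousLinearMap.le_of_opNorm_le _ lA _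
      _ ≤ h * ((C * X) * C) := by gcongr
      _ = C ^ 2 * h * X := by ring
      _ ≤ _ := hmono 2 (by norm_num)
  have c7 : ‖h • (gQ0 - g0)‖ ≤ C ^ 5 * h * X := by
    rw [norm_smul, Real.norm_of_nonneg hh]
    calc _ ≤ h * (C * X) := by gcongr; exact lg.trans (by gcongr)
      _ = C ^ 1 * h * X := by ring
      _ ≤ _ := hmono 1 (by norm_num)
  refine (norm_sub_le_of_le (norm_sub_le_of_le (norm_sub_le_of_le (norm_add_le_of_le
    (norm_add_le_of_le (norm_add_le_of_le ((norm_neg _).le.trans (tp.trans c1)) c2) c3) c4)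
    c5) c6) c7).trans (le_of_eq ?_)
  ring

lemma lipschitz_of_deriv_bound {F : Type*} [NormedAddCommGroup F] [NormedSpace ℝ F]
    {T C : ℝ} {f f' : ℝ → F} (hf : ∀ t ∈ Set.Icc (0 : ℝ) T, HasDerivAt f (f' t) t)
    (hf' : ∀ t ∈ Set.Icc (0 : ℝ) T, ‖f' t‖ ≤ C) :
    ∀ s ∈ Set.Icc (0 : ℝ) T, ∀ t ∈ Set.Icc (0 : ℝ) T, ‖f s - f t‖ ≤ C * |s - t| := by
  intro s hs t ht
  exact (convex_Icc 0 T).norm_image_sub_le_of_norm_hasDerivWithin_le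
    (fun x hx => (hf x hx).hasDerivWithinAt) hf' ht hs

set_option maxHeartbeats 1000000 in
/-- First-order convergence of the reflected Euler scheme, with the matrix structure abstracted
away: `A x` is a projection-valued `C²` map, `1 - 2 A x` preserves a norm `N` equivalent to `‖·‖`,
`W` is the inverse mass, `g` the potential gradient and `G` the constraint force, which along the
solution lies in the range of `A` while the momentum lies in its kernel. -/
theorem reflected_euler_convergent {E : Type*} [NormedAddCommGroup E] [NormedSpace ℝ E]
    [FiniteDimensional ℝ E] (W : E →L[ℝ] E) {A : E → E →L[ℝ] E} (hA : ContDiff ℝ 2 A)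
    {g : E → E} (hg : ContDiff ℝ 1 g) {G : E × E → E} (hG : ContDiff ℝ 1 G)
    {N : E → ℝ} {c : ℝ} (hc : 1 ≤ c) (N_add : ∀ x y, N (x + y) ≤ N x + N y)
    (N_le : ∀ x, N x ≤ c * ‖x‖) (le_N : ∀ x, ‖x‖ ≤ c * N x)
    (hproj : ∀ x y, A x (A x y) = A x y) (hrefl : ∀ x y, N (y - (2 : ℝ) • A x y) = N y)
    {T : ℝ} (hT : 0 < T) {q p : ℝ → E}
    (hq : ∀ t ∈ Set.Icc (0 : ℝ) T, HasDerivAt q (W (p t)) t)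
    (hp : ∀ t ∈ Set.Icc (0 : ℝ) T, HasDerivAt p (-g (q t) - G (q t, p t)) t)
    (hAp : ∀ t ∈ Set.Icc (0 : ℝ) T, A (q t) (p t) = 0)
    (hAG : ∀ t ∈ Set.Icc (0 : ℝ) T, A (q t) (G (q t, p t)) = G (q t, p t)) :
    ∃ K > (0 : ℝ), ∃ h₀ > (0 : ℝ), ∀ h : ℝ, 0 < h → h ≤ h₀ →
      ∀ Q P : ℕ → E, Q 0 = q 0 → P 0 = p 0 →
        (∀ k : ℕ, P (k + 1) = P k - h • g (Q k) - (2 : ℝ) • A (Q k) (P k)) →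
        (∀ k : ℕ, Q (k + 1) = Q k + h • W (P (k + 1))) →
        ∀ k : ℕ, (k : ℝ) * h ≤ T → ‖Q k - q ((k : ℝ) * h)‖ ≤ K * h := by
  have h0T : (0 : ℝ) ∈ Set.Icc (0 : ℝ) T := ⟨le_rfl, hT.le⟩
  obtain ⟨Bq, hBq⟩ := (isCompact_Icc (a := (0 : ℝ)) (b := T)).exists_bound_of_continuousOn
    (f := q) (fun t ht => (hq t ht).continuousAt.continuousWithinAt)
  obtain ⟨Bp, hBp⟩ := (isCompact_Icc (a := (0 : ℝ)) (b := T)).exists_bound_of_continuousOn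
    (f := p) (fun t ht => (hp t ht).continuousAt.continuousWithinAt)
  have hBq0 : 0 ≤ Bq := (norm_nonneg _).trans (hBq 0 h0T)
  have hBp0 : 0 ≤ Bp := (norm_nonneg _).trans (hBp 0 h0T)
  -- Radius leaving room for the errors: `1` at the current step and `2` at the next one.
  set ρ := Bq + 2 with hρ
  obtain ⟨CA, hCA0, hCA⟩ := exists_lipschitz_bound_of_contDiff (hA.of_le (by norm_num)) ρ
  obtain ⟨CA2, hCA20, hCA2⟩ := exists_second_difference_bound hA ρ
  obtain ⟨Cg, hCg0, hCg⟩ := exists_lipschitz_bound_of_contDiff hg ρ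
  obtain ⟨CG, hCG0, hCG⟩ := exists_lipschitz_bound_of_contDiff hG (Bq + Bp)
  have hqρ : ∀ t ∈ Set.Icc (0 : ℝ) T, ‖q t‖ ≤ ρ := fun t ht => (hBq t ht).trans (by linarith)
  have hqp : ∀ t ∈ Set.Icc (0 : ℝ) T, ‖(q t, p t)‖ ≤ Bq + Bp := fun t ht =>
    (norm_prod_le_iff).2 ⟨(hBq t ht).trans (by linarith), (hBp t ht).trans (by linarith)⟩
  have lq := lipschitz_of_deriv_bound hq (C := ‖W‖ * Bp) (fun t ht =>
    (W.le_opNorm _).trans (by gcongr; exact hBp t ht))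
  have lp := lipschitz_of_deriv_bound hp (C := Cg + CG) (fun t ht => by
    have := norm_sub_le (-g (q t)) (G (q t, p t))
    rw [norm_neg] at this
    linarith [(hCg _ (hqρ t ht)).1, (hCG _ (hqp t ht)).1])
  set Lq := ‖W‖ * Bp with hLq
  set Lp := Cg + CG with hLp
  have hLq0 : 0 ≤ Lq := by positivity
  have hLp0 : 0 ≤ Lp := by positivity
  have lG : ∀ s ∈ Set.Icc (0 : ℝ) T, ∀ t ∈ Set.Icc (0 : ℝ) T,
      ‖G (q s, p s) - G (q t, p t)‖ ≤ CG * (Lq + Lp) * |s - t| := by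
    intro s hs t ht
    refine ((hCG _ (hqp s hs)).2 _ (hqp t ht)).trans ?_
    rw [mul_assoc]
    gcongr
    rw [Prod.mk_sub_mk]
    have a0 := abs_nonneg (s - t)
    refine norm_prod_le_iff.2 ⟨(lq s hs t ht).trans ?_, (lp s hs t ht).trans ?_⟩ <;> gcongr <;>
      linarith
  have lgq : ∀ s ∈ Set.Icc (0 : ℝ) T, ∀ t ∈ Set.Icc (0 : ℝ) T,
      ‖g (q s) - g (q t)‖ ≤ Cg * Lq * |s - t| := by
    intro s hs t ht
    refine ((hCg _ (hqρ s hs)).2 _ (hqρ t ht)).trans ?_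
    rw [mul_assoc]
    gcongr
    exact lq s hs t ht
  have ldq : ∀ s ∈ Set.Icc (0 : ℝ) T, ∀ t ∈ Set.Icc (0 : ℝ) T,
      ‖W (p s) - W (p t)‖ ≤ ‖W‖ * Lp * |s - t| := by
    intro s hs t ht
    rw [← map_sub, mul_assoc]
    exact (W.le_opNorm _).trans (by gcongr; exact lp s hs t ht)
  have ldp : ∀ s ∈ Set.Icc (0 : ℝ) T, ∀ t ∈ Set.Icc (0 : ℝ) T,
      ‖(-g (q s) - G (q s, p s)) - (-g (q t) - G (q t, p t))‖
        ≤ (Cg * Lq + CG * (Lq + Lp)) * |s - t| := by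
    intro s hs t ht
    have e : (-g (q s) - G (q s, p s)) - (-g (q t) - G (q t, p t))
        = -(g (q s) - g (q t)) - (G (q s, p s) - G (q t, p t)) := by abel
    rw [e, add_mul]
    exact norm_sub_le_of_le ((norm_neg _).le.trans (lgq s hs t ht)) (lG s hs t ht)
  obtain ⟨C, hC1, hCc, hCW, hCBp, hCCA, hCCA2, hCCg, hCCG, hCLq, hCLp, hC2, hC3, hC4⟩ :
      ∃ C : ℝ, 1 ≤ C ∧ c ≤ C ∧ ‖W‖ ≤ C ∧ Bp ≤ C ∧ CA ≤ C ∧ CA2 ≤ C ∧ Cg ≤ C ∧ CG ≤ C ∧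
        Lq ≤ C ∧ Lp ≤ C ∧ CG * (Lq + Lp) ≤ C ∧ ‖W‖ * Lp ≤ C ∧ Cg * Lq + CG * (Lq + Lp) ≤ C := by
    have w0 := norm_nonneg W
    have i1 : 0 ≤ CG * (Lq + Lp) := by positivity
    have i2 : 0 ≤ ‖W‖ * Lp := by positivity
    have i3 : 0 ≤ Cg * Lq := by positivity
    refine ⟨c + ‖W‖ + Bp + CA + CA2 + Cg + CG + Lq + Lp + ‖W‖ * Lp
      + (Cg * Lq + CG * (Lq + Lp)), ?_, ?_, ?_, ?_, ?_, ?_, ?_, ?_, ?_, ?_, ?_, ?_, ?_⟩ <;>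
    linarith
  have hC0 : 0 ≤ C := by linarith
  have hN0 : ∀ x, 0 ≤ N x := fun x => by
    have := (norm_nonneg x).trans (le_N x)
    exact nonneg_of_mul_nonneg_right this (by linarith)
  set L := 14 * C ^ 7 with hL
  have hL0 : 0 ≤ L := by positivity
  set K := (C ^ 2 + 1) * Real.exp (L * T) with hK
  have hK0 : 0 < K := by positivity
  refine ⟨K, hK0, min (1 / K) (min 1 (1 / (8 * C ^ 4))), by positivity, ?_⟩
  intro h hh hh₀ Q P hQ0 hP0 hP hQ
  have hhK : h * K ≤ 1 := by
    have := hh₀.trans (min_le_left _ _)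
    rwa [le_div_iff₀ hK0] at this
  have hh1 : h ≤ 1 := hh₀.trans ((min_le_right _ _).trans (min_le_left _ _))
  have hhC : h * (8 * C ^ 4) ≤ 1 := by
    have := hh₀.trans ((min_le_right _ _).trans (min_le_right _ _))
    rwa [le_div_iff₀ (by positivity)] at this
  -- The momentum error, relative to the shadow momentum of `defect_step`.
  set ε : ℕ → E := fun k => P k - (p (k * h) - A (Q k) (p (k * h))
    + (h / 2) • G (q (k * h), p (k * h))) with hε
  set a : ℕ → ℝ := fun k => N (ε k) + ‖Q k - q (k * h)‖ with ha
  have ha0 : a 0 ≤ C ^ 2 * h := by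
    have e : ε 0 = -((h / 2) • G (q 0, p 0)) := by
      simp only [hε, Nat.cast_zero, zero_mul, hP0, hQ0, hAp 0 h0T]
      abel
    have : a 0 = N (ε 0) := by simp [ha, hQ0]
    rw [this]
    refine (N_le _).trans ?_
    rw [e, norm_neg, norm_smul, Real.norm_of_nonneg (by positivity)]
    calc c * (h / 2 * ‖G (q 0, p 0)‖) ≤ C * (h * C) := by
          have := (hCG _ (hqp 0 h0T)).1
          gcongr
          · linarith
          · linarith
      _ = C ^ 2 * h := by ring
  have ha0' : 0 ≤ a 0 := add_nonneg (hN0 _) (norm_nonneg _)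
  have hKa : (a 0 + h) * Real.exp (L * T) ≤ K * h := by
    rw [hK]
    calc (a 0 + h) * Real.exp (L * T) ≤ (C ^ 2 * h + h) * Real.exp (L * T) := by gcongr
      _ = _ := by ring
  have hstep : ∀ k : ℕ, ((k + 1 : ℕ) : ℝ) * h ≤ T → a k ≤ 1 →
      a (k + 1) ≤ a k + L * h * (a k + h) := by
    intro k hk hak
    have et : ((k + 1 : ℕ) : ℝ) * h = k * h + h := by push_cast; ring
    have ht0 : 0 ≤ (k : ℝ) * h := by positivity
    have hth : (k : ℝ) * h + h ≤ T := et ▸ hk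
    have ht : (k : ℝ) * h ∈ Set.Icc (0 : ℝ) T := ⟨ht0, by linarith⟩
    have ht' : (k : ℝ) * h + h ∈ Set.Icc (0 : ℝ) T := ⟨by linarith, hth⟩
    have e1 : ε (k + 1) = P (k + 1) - (p (k * h + h) - A (Q (k + 1)) (p (k * h + h))
      + (h / 2) • G (q (k * h + h), p (k * h + h))) := by simp only [hε, et]
    have a1 : a (k + 1) = N (ε (k + 1)) + ‖Q (k + 1) - q (k * h + h)‖ := by simp only [ha, et]
    set t := (k : ℝ) * h with htdef
    have habs : |t + h - t| = h := by rw [add_sub_cancel_left, abs_of_pos hh]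
    have hNk := hN0 (ε k)
    have hdk : ‖Q k - q t‖ ≤ 1 := by simp only [ha] at hak; linarith
    have hQk : ‖Q k‖ ≤ ρ := by
      have := norm_le_norm_add_norm_sub' (Q k) (q t)
      linarith [hBq t ht]
    obtain ⟨bd, brem⟩ := defect_step (A0 := A (q t)) (A1 := A (q (t + h))) (W := W)
      (AQ0 := A (Q k)) (AQ1 := A (Q (k + 1))) (Am := A (q (t + h) + (Q k - q t)))
      (q0 := q t) (q1 := q (t + h)) (p0 := p t) (p1 := p (t + h)) (F0 := G (q t, p t))
      (F1 := G (q (t + h), p (t + h))) (g0 := g (q t)) (gQ0 := g (Q k)) (Q0 := Q k)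
      (Q1 := Q (k + 1)) (P0 := P k) (P1 := P (k + 1)) (h := h) (C := C) hC1 hh.le
      (hproj _) (hAp t ht) (hAp _ ht') (hAG t ht) (hP k) (hQ k) hCW
      ((hCA _ hQk).1.trans hCCA) ((hBp t ht).trans hCBp) ((hBp _ ht').trans hCBp)
      ((hCG _ (hqp t ht)).1.trans hCCG) ((hCg _ hQk).1.trans hCCg)
      (((hCA _ hQk).2 _ (hqρ t ht)).trans (by gcongr))
      (((hCg _ hQk).2 _ (hqρ t ht)).trans (by gcongr))
      ((lG _ ht' t ht).trans (by rw [habs]; gcongr))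
      ((lp _ ht' t ht).trans (by rw [habs]; gcongr))
      ((taylor_of_lipschitz_deriv hq ldq (by positivity) ht0 hh.le hth).trans (by gcongr))
      ((taylor_of_lipschitz_deriv hp ldp (by positivity) ht0 hh.le hth).trans (by gcongr))
    have eε : P k - (p t - A (Q k) (p t) + (h / 2) • G (q t, p t)) = ε k := rfl
    rw [eε] at bd brem
    rw [← e1] at brem
    set X := ‖ε k‖ + ‖Q k - q t‖ + h with hX
    have hak0 : 0 ≤ a k := add_nonneg (hN0 _) (norm_nonneg _)
    have hXa : X ≤ C * (a k + h) := by
      have i1 : ‖ε k‖ ≤ C * N (ε k) := (le_N _).trans (by gcongr)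
      have i2 : ‖Q k - q t‖ ≤ C * ‖Q k - q t‖ := le_mul_of_one_le_left (norm_nonneg _) hC1
      have i3 : h ≤ C * h := le_mul_of_one_le_left hh.le hC1
      have i4 : C * (a k + h) = C * N (ε k) + C * ‖Q k - q t‖ + C * h := by
        simp only [ha]; ring
      linarith
    have bd1 : ‖(Q (k + 1) - q (t + h)) - (Q k - q t)‖ ≤ 4 * C ^ 4 * h * (a k + h) := by
      refine bd.trans ?_
      calc 4 * C ^ 3 * h * X ≤ 4 * C ^ 3 * h * (C * (a k + h)) := by gcongr
        _ = _ := by ring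
    have bd2 : ‖(Q (k + 1) - q (t + h)) - (Q k - q t)‖ ≤ 1 := by
      refine bd1.trans ?_
      calc 4 * C ^ 4 * h * (a k + h) ≤ 4 * C ^ 4 * h * (1 + 1) := by gcongr
        _ = h * (8 * C ^ 4) := by ring
        _ ≤ 1 := hhC
    have hm : ‖q (t + h) + (Q k - q t)‖ ≤ ρ := by
      have := norm_add_le (q (t + h)) (Q k - q t)
      linarith [hBq _ ht']
    have hQk1 : ‖Q (k + 1)‖ ≤ ρ := by
      have e : Q (k + 1) = (q (t + h) + (Q k - q t))
        + ((Q (k + 1) - q (t + h)) - (Q k - q t)) := by abel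
      have i1 := norm_add_le (q (t + h)) (Q k - q t)
      have i2 := norm_add_le (q (t + h) + (Q k - q t))
        ((Q (k + 1) - q (t + h)) - (Q k - q t))
      rw [← e] at i2
      linarith [hBq _ ht']
    obtain ⟨r, hr, br⟩ := brem
      (by
        have e : Q (k + 1) - (q (t + h) + (Q k - q t))
          = (Q (k + 1) - q (t + h)) - (Q k - q t) := by abel
        have := (hCA _ hQk1).2 _ hm
        rw [e] at this
        exact this.trans (by gcongr))
      (by
        have e : q t + (Q k - q t) = Q k := by abel
        have i1 := hCA2 (q t) (q (t + h)) (Q k - q t) (hqρ t ht) (hqρ _ ht') (by rwa [e]) hm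
        rw [e] at i1
        have i2 := lq _ ht' t ht
        rw [habs] at i2
        refine i1.trans ?_
        gcongr
        exact i2.trans (by gcongr))
    have bN : N (ε (k + 1)) ≤ N (ε k) + 10 * C ^ 7 * h * (a k + h) := by
      rw [hr]
      refine (N_add _ _).trans ?_
      rw [hrefl]
      gcongr
      calc N r ≤ C * ‖r‖ := (N_le r).trans (by gcongr)
        _ ≤ C * (10 * C ^ 5 * h * (C * (a k + h))) := by
            gcongr
            exact br.trans (by gcongr)
        _ = _ := by ring
    have bD : ‖Q (k + 1) - q (t + h)‖ ≤ ‖Q k - q t‖ + 4 * C ^ 7 * h * (a k + h) := by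
      have i1 := norm_le_norm_add_norm_sub' (Q (k + 1) - q (t + h)) (Q k - q t)
      have i2 : 4 * C ^ 4 * h * (a k + h) ≤ 4 * C ^ 7 * h * (a k + h) := by
        gcongr; norm_num
      linarith
    rw [a1]
    have i1 : a k = N (ε k) + ‖Q k - q t‖ := rfl
    have i2 : L * h * (a k + h) = 10 * C ^ 7 * h * (a k + h) + 4 * C ^ 7 * h * (a k + h) := by
      rw [hL]; ring
    linarith
  intro k hk
  have h1 := bootstrap_gronwall hL0 hh.le (hKa.trans (by linarith)) ha0' hstep k hk
  have h2 : ‖Q k - q (k * h)‖ ≤ a k := le_add_of_nonneg_left (hN0 _)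
  exact h2.trans (h1.trans hKa)

/-! ### Matrix smoothness, the constraint projection and the kinetic norm -/

section matrices
variable {n m : ℕ}

lemma contDiff_det_of_entries {X : Type*} [NormedAddCommGroup X] [NormedSpace ℝ X]
    {k : WithTop ℕ∞} {D : X → Matrix (Fin m) (Fin m) ℝ}
    (hD : ∀ a b, ContDiff ℝ k fun x => D x a b) : ContDiff ℝ k fun x => (D x).det := by
  simp only [Matrix.det_apply]
  refine ContDiff.sum fun σ _ => ContDiff.const_smul _ ?_
  exact contDiff_prod fun i _ => hD _ _

lemma contDiff_inv_of_entries {X : Type*} [NormedAddCommGroup X] [NormedSpace ℝ X]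
    {k : WithTop ℕ∞} {D : X → Matrix (Fin m) (Fin m) ℝ}
    (hD : ∀ a b, ContDiff ℝ k fun x => D x a b) (hu : ∀ x, IsUnit (D x)) (a b : Fin m) :
    ContDiff ℝ k fun x => (D x)⁻¹ a b := by
  simp only [Matrix.inv_def, Ring.inverse_eq_inv', Matrix.smul_apply, smul_eq_mul,
    Matrix.adjugate_apply]
  refine ContDiff.mul ((contDiff_det_of_entries hD).inv fun x => ?_)
    (contDiff_det_of_entries fun i j => ?_)
  · exact ((Matrix.isUnit_iff_isUnit_det _).1 (hu x)).ne_zero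
  · by_cases hi : i = b
    · subst hi; simpa [Matrix.updateRow_apply] using contDiff_const
    · simpa [Matrix.updateRow_apply, hi] using hD i j

lemma contDiff_mul_of_entries {X : Type*} [NormedAddCommGroup X] [NormedSpace ℝ X]
    {l r s : ℕ} {k : WithTop ℕ∞} {D : X → Matrix (Fin l) (Fin r) ℝ}
    {D' : X → Matrix (Fin r) (Fin s) ℝ}
    (hD : ∀ a b, ContDiff ℝ k fun x => D x a b) (hD' : ∀ a b, ContDiff ℝ k fun x => D' x a b)
    (a : Fin l) (b : Fin s) : ContDiff ℝ k fun x => (D x * D' x) a b := by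
  simp only [Matrix.mul_apply]
  exact ContDiff.sum fun i _ => (hD _ _).mul (hD' _ _)

lemma contDiff_mulVec_of_entries {X : Type*} [NormedAddCommGroup X] [NormedSpace ℝ X]
    {l r : ℕ} {k : WithTop ℕ∞} {D : X → Matrix (Fin l) (Fin r) ℝ} {v : X → Fin r → ℝ}
    (hD : ∀ a b, ContDiff ℝ k fun x => D x a b) (hv : ContDiff ℝ k v) :
    ContDiff ℝ k fun x => D x *ᵥ v x := by
  rw [contDiff_pi]
  intro a
  simp only [Matrix.mulVec, dotProduct]
  exact ContDiff.sum fun i _ => (hD _ _).mul (contDiff_pi.1 hv i)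

/-- The projection `μᵀ (μ M⁻¹ μᵀ)⁻¹ μ M⁻¹` of momentum space onto the range of `μᵀ`, orthogonal
for the inner product `M⁻¹`. It uses the matrix inverse and is meaningful when `μ M⁻¹ μᵀ` is
invertible. -/
noncomputable def constraintProj (M : Matrix (Fin n) (Fin n) ℝ) (μ : Matrix (Fin m) (Fin n) ℝ) :
    Matrix (Fin n) (Fin n) ℝ :=
  μᵀ * (μ * M⁻¹ * μᵀ)⁻¹ * μ * M⁻¹

variable {M : Matrix (Fin n) (Fin n) ℝ} {μ : Matrix (Fin m) (Fin n) ℝ}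

lemma constraintProj_mul_transpose (hC : IsUnit (μ * M⁻¹ * μᵀ)) :
    constraintProj M μ * μᵀ = μᵀ := by
  have h : (μ * M⁻¹ * μᵀ)⁻¹ * (μ * M⁻¹ * μᵀ) = 1 :=
    Matrix.nonsing_inv_mul _ ((Matrix.isUnit_iff_isUnit_det _).1 hC)
  calc constraintProj M μ * μᵀ = μᵀ * ((μ * M⁻¹ * μᵀ)⁻¹ * (μ * M⁻¹ * μᵀ)) := by
        simp only [constraintProj, Matrix.mul_assoc]
    _ = μᵀ := by rw [h, Matrix.mul_one]

lemma constraintProj_idem (hC : IsUnit (μ * M⁻¹ * μᵀ)) :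
    constraintProj M μ * constraintProj M μ = constraintProj M μ := by
  have h := constraintProj_mul_transpose hC
  calc constraintProj M μ * constraintProj M μ
      = (constraintProj M μ * μᵀ) * ((μ * M⁻¹ * μᵀ)⁻¹ * μ * M⁻¹) := by
        simp only [constraintProj, Matrix.mul_assoc]
    _ = constraintProj M μ := by rw [h]; simp only [constraintProj, Matrix.mul_assoc]

/-- The reflection `1 - 2Π` preserves the quadratic form `M⁻¹`: `Π` is self-adjoint for it and
idempotent. -/
lemma reflection_isometry (hMsymm : Mᵀ = M) (hC : IsUnit (μ * M⁻¹ * μᵀ)) :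
    (1 - (2 : ℝ) • constraintProj M μ)ᵀ * M⁻¹ * (1 - (2 : ℝ) • constraintProj M μ) = M⁻¹ := by
  have hs : (M⁻¹)ᵀ = M⁻¹ := by rw [Matrix.transpose_nonsing_inv, hMsymm]
  have hCs : ((μ * M⁻¹ * μᵀ)⁻¹)ᵀ = (μ * M⁻¹ * μᵀ)⁻¹ := by
    rw [Matrix.transpose_nonsing_inv]
    simp only [Matrix.transpose_mul, Matrix.transpose_transpose, hs, Matrix.mul_assoc]
  have hadj : (constraintProj M μ)ᵀ * M⁻¹ = M⁻¹ * constraintProj M μ := by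
    rw [constraintProj]
    simp only [Matrix.transpose_mul, Matrix.transpose_transpose, hs, hCs]
    simp only [Matrix.mul_assoc]
  have hidem := constraintProj_idem hC
  set R := constraintProj M μ
  have h1 : (1 - (2 : ℝ) • R)ᵀ * M⁻¹ = M⁻¹ * (1 - (2 : ℝ) • R) := by
    simp only [Matrix.transpose_sub, Matrix.transpose_one, Matrix.transpose_smul, Matrix.sub_mul,
      Matrix.mul_sub, Matrix.one_mul, Matrix.mul_one, Matrix.smul_mul, Matrix.mul_smul, hadj]
  have h2 : (1 - (2 : ℝ) • R) * (1 - (2 : ℝ) • R) = 1 := by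
    simp only [Matrix.sub_mul, Matrix.mul_sub, Matrix.one_mul, Matrix.mul_one, Matrix.smul_mul,
      Matrix.mul_smul, hidem]
    module
  rw [h1, Matrix.mul_assoc, h2, Matrix.mul_one]

/-- The norm `N x = √(xᵀ M⁻¹ x)`, realised as the Euclidean norm of `B x` with `M⁻¹ = Bᵀ B`. It is
equivalent to the sup norm and invariant under every isometry of the quadratic form `M⁻¹`. -/
lemma exists_kinetic_norm (hM : M.PosDef) :
    ∃ (N : (Fin n → ℝ) → ℝ) (c : ℝ), 1 ≤ c ∧ (∀ x y, N (x + y) ≤ N x + N y) ∧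
      (∀ x, N x ≤ c * ‖x‖) ∧ (∀ x, ‖x‖ ≤ c * N x) ∧
      ∀ R : Matrix (Fin n) (Fin n) ℝ, Rᵀ * M⁻¹ * R = M⁻¹ → ∀ x, N (R *ᵥ x) = N x := by
  have hW : (M⁻¹).PosDef := hM.inv
  obtain ⟨B, hB, hWB⟩ : ∃ B : Matrix (Fin n) (Fin n) ℝ, IsUnit B ∧ M⁻¹ = Bᵀ * B := by
    open scoped MatrixOrder in
    obtain ⟨B, hB, h⟩ := CStarAlgebra.isStrictlyPositive_iff_eq_star_mul_self.mp
      hW.isStrictlyPositive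
    exact ⟨B, hB, by simpa [Matrix.star_eq_conjTranspose] using h⟩
  have hdet : IsUnit B.det := (Matrix.isUnit_iff_isUnit_det _).1 hB
  let L : (Fin n → ℝ) →L[ℝ] EuclideanSpace ℝ (Fin n) :=
    ((WithLp.linearEquiv 2 ℝ (Fin n → ℝ)).symm.toLinearMap ∘ₗ B.mulVecLin).toContinuousLinearMap
  let L' : EuclideanSpace ℝ (Fin n) →L[ℝ] (Fin n → ℝ) :=
    (B⁻¹.mulVecLin ∘ₗ (WithLp.linearEquiv 2 ℝ (Fin n → ℝ)).toLinearMap).toContinuousLinearMap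
  have hLL : ∀ x, L' (L x) = x := fun x => by
    simp [L, L', Matrix.mulVec_mulVec, Matrix.nonsing_inv_mul _ hdet]
  have hsq : ∀ x, ‖L x‖ ^ 2 = x ⬝ᵥ (M⁻¹ *ᵥ x) := fun x => by
    rw [EuclideanSpace.norm_sq_eq, hWB, ← Matrix.mulVec_mulVec, Matrix.dotProduct_mulVec,
      Matrix.vecMul_transpose]
    simp [L, dotProduct, sq]
  refine ⟨fun x => ‖L x‖, 1 + ‖L‖ + ‖L'‖, ?_, ?_, ?_, ?_, ?_⟩
  · linarith [norm_nonneg L, norm_nonneg L']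
  · intro x y
    simpa using norm_add_le (L x) (L y)
  · intro x
    refine (L.le_opNorm x).trans ?_
    gcongr
    linarith [norm_nonneg L']
  · intro x
    calc ‖x‖ = ‖L' (L x)‖ := by rw [hLL]
      _ ≤ ‖L'‖ * ‖L x‖ := L'.le_opNorm _
      _ ≤ _ := by gcongr; linarith [norm_nonneg L]
  · intro R hR x
    refine (sq_eq_sq₀ (norm_nonneg _) (norm_nonneg _)).1 ?_
    rw [hsq, hsq]
    conv_rhs => rw [← hR]
    rw [← Matrix.mulVec_mulVec, ← Matrix.mulVec_mulVec, Matrix.dotProduct_mulVec x,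
      Matrix.vecMul_transpose]

end matrices

/-! ### The nonholonomic system -/

lemma contDiff_gradient {n : ℕ} {V : (Fin n → ℝ) → ℝ} (hV : ContDiff ℝ 2 V)
    {Vq : (Fin n → ℝ) → Fin n → ℝ} (hVq : ∀ x, HasFDerivAt V (vecCLM (Vq x)) x) :
    ContDiff ℝ 1 Vq := by
  have h1 : ContDiff ℝ 1 (fderiv ℝ V) := hV.fderiv_right (by norm_num)
  rw [contDiff_pi]
  intro i
  have h2 : (fun x => Vq x i) = fun x => fderiv ℝ V x (Pi.single i 1) := by
    funext x
    rw [(hVq x).fderiv]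
    simp [vecCLM, Pi.single_apply]
  rw [h2]
  exact h1.clm_apply contDiff_const

/-- The multiplier in the equation of motion makes the derivative of `μ(q) M⁻¹ p` vanish, so the
constraint persists from the initial time. -/
lemma constraint_preserved {n m : ℕ} {M : Matrix (Fin n) (Fin n) ℝ}
    {Vq : (Fin n → ℝ) → Fin n → ℝ} {μ : (Fin n → ℝ) → Matrix (Fin m) (Fin n) ℝ}
    (hμ : ∀ a i, ContDiff ℝ 2 fun x => μ x a i)
    (hC : ∀ x : Fin n → ℝ, IsUnit (μ x * M⁻¹ * (μ x)ᵀ)) {T : ℝ} (hT : 0 < T)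
    {q p : ℝ → Fin n → ℝ}
    (hq : ∀ t ∈ Set.Icc (0 : ℝ) T, HasDerivAt q (M⁻¹ *ᵥ p t) t)
    (hp : ∀ t ∈ Set.Icc (0 : ℝ) T, HasDerivAt p
      (-Vq (q t) - (μ (q t))ᵀ *ᵥ ((μ (q t) * M⁻¹ * (μ (q t))ᵀ)⁻¹ *ᵥ
        ((fun a => ∑ i, fderiv ℝ (fun x => μ x a i) (q t) (M⁻¹ *ᵥ p t) *
            (M⁻¹ *ᵥ p t) i) -
          μ (q t) *ᵥ (M⁻¹ *ᵥ Vq (q t))))) t)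
    (hinit : μ (q 0) *ᵥ (M⁻¹ *ᵥ p 0) = 0) :
    ∀ t ∈ Set.Icc (0 : ℝ) T, μ (q t) *ᵥ (M⁻¹ *ᵥ p t) = 0 := by
  have hder : ∀ t ∈ Set.Icc (0 : ℝ) T,
      HasDerivAt (fun s => μ (q s) *ᵥ (M⁻¹ *ᵥ p s)) ((fun _ => 0) t) t := by
    intro t ht
    set w : Fin m → ℝ := (fun a => ∑ i, fderiv ℝ (fun x => μ x a i) (q t) (M⁻¹ *ᵥ p t) *
            (M⁻¹ *ᵥ p t) i) with hw
    set p' := -Vq (q t) - (μ (q t))ᵀ *ᵥ ((μ (q t) * M⁻¹ * (μ (q t))ᵀ)⁻¹ *ᵥ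
        (w - μ (q t) *ᵥ (M⁻¹ *ᵥ Vq (q t)))) with hp'
    have hcancel : w + μ (q t) *ᵥ (M⁻¹ *ᵥ p') = 0 := by
      have hdet := (Matrix.isUnit_iff_isUnit_det _).1 (hC (q t))
      have e : ∀ z, μ (q t) *ᵥ (M⁻¹ *ᵥ ((μ (q t))ᵀ *ᵥ z)) = (μ (q t) * M⁻¹ * (μ (q t))ᵀ) *ᵥ z :=
        fun z => by simp only [Matrix.mulVec_mulVec, Matrix.mul_assoc]
      have e' : ∀ z, (μ (q t) * M⁻¹ * (μ (q t))ᵀ) *ᵥ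
          ((μ (q t) * M⁻¹ * (μ (q t))ᵀ)⁻¹ *ᵥ z) = z :=
        fun z => by rw [Matrix.mulVec_mulVec, Matrix.mul_nonsing_inv _ hdet, Matrix.one_mulVec]
      rw [hp', Matrix.mulVec_sub, Matrix.mulVec_sub, e, e', Matrix.mulVec_neg, Matrix.mulVec_neg]
      abel
    have hv : HasDerivAt (fun s => M⁻¹ *ᵥ p s) (M⁻¹ *ᵥ p') t :=
      (M⁻¹.mulVecLin.toContinuousLinearMap).hasFDerivAt.comp_hasDerivAt t (hp t ht)
    rw [hasDerivAt_pi]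
    intro a
    have h1 : HasDerivAt (fun s => ∑ i, μ (q s) a i * (M⁻¹ *ᵥ p s) i)
        (∑ i, (fderiv ℝ (fun x => μ x a i) (q t) (M⁻¹ *ᵥ p t) * (M⁻¹ *ᵥ p t) i
          + μ (q t) a i * (M⁻¹ *ᵥ p') i)) t := by
      refine HasDerivAt.fun_sum fun i _ => HasDerivAt.fun_mul ?_ (hasDerivAt_pi.1 hv i)
      exact ((((hμ a i).differentiable two_ne_zero) (q t)).hasFDerivAt).comp_hasDerivAt t (hq t ht)
    have h2 : (∑ i, (fderiv ℝ (fun x => μ x a i) (q t) (M⁻¹ *ᵥ p t) * (M⁻¹ *ᵥ p t) i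
          + μ (q t) a i * (M⁻¹ *ᵥ p') i)) = 0 := by
      rw [Finset.sum_add_distrib]
      exact congrFun hcancel a
    rw [h2] at h1
    exact h1
  intro t ht
  have := lipschitz_of_deriv_bound (C := 0) hder (fun t _ => by simp) t ht 0 ⟨le_rfl, hT.le⟩
  rw [zero_mul] at this
  have h0 := sub_eq_zero.1 (norm_le_zero_iff.1 this)
  rw [h0, hinit]

/-- Global first-order convergence of the nonholonomic Euler A
method. `(q, p)` is a `C¹` solution on `[0,T]` of the constrained Hamiltonian
system `q̇ = M⁻¹p`,
`ṗ = −V_q(q) − μ(q)ᵀ C(q)⁻¹ (μ_q(q)[M⁻¹p, M⁻¹p] − μ(q) M⁻¹ V_q(q))`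
with `C(q) = μ(q) M⁻¹ μ(q)ᵀ` invertible everywhere and constrained initial
condition. `Q k` stands for `q_k` and `P k` for `p_{k−1/2}` in the discrete
scheme `p_{k+1/2} = p_{k−1/2} − h V_q(q_k) − 2 μ(q_k)ᵀ C(q_k)⁻¹ μ(q_k) M⁻¹
p_{k−1/2}`, `q_{k+1} = q_k + h M⁻¹ p_{k+1/2}`. Then there are `K > 0`, `h₀ > 0`
with `‖q_k − q(k·h)‖ ≤ K·h` for all `0 < h ≤ h₀` and `k·h ≤ T`. -/
theorem nonholonomic_eulerA_first_order_convergent {n m : ℕ}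
    (M : Matrix (Fin n) (Fin n) ℝ) (hM : M.PosDef) (hMsymm : Mᵀ = M)
    (V : (Fin n → ℝ) → ℝ) (hV : ContDiff ℝ 2 V)
    (Vq : (Fin n → ℝ) → Fin n → ℝ)
    (hVq : ∀ x, HasFDerivAt V (vecCLM (Vq x)) x)
    (μ : (Fin n → ℝ) → Matrix (Fin m) (Fin n) ℝ)
    (hμ : ∀ a i, ContDiff ℝ 2 fun x => μ x a i)
    (hC : ∀ x : Fin n → ℝ, IsUnit (μ x * M⁻¹ * (μ x)ᵀ))
    (T : ℝ) (hT : 0 < T)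
    (q p : ℝ → Fin n → ℝ)
    (hq : ∀ t ∈ Set.Icc (0 : ℝ) T, HasDerivAt q (M⁻¹ *ᵥ p t) t)
    (hp : ∀ t ∈ Set.Icc (0 : ℝ) T, HasDerivAt p
      (-Vq (q t) - (μ (q t))ᵀ *ᵥ ((μ (q t) * M⁻¹ * (μ (q t))ᵀ)⁻¹ *ᵥ
        ((fun a => ∑ i, fderiv ℝ (fun x => μ x a i) (q t) (M⁻¹ *ᵥ p t) *
            (M⁻¹ *ᵥ p t) i) -
          μ (q t) *ᵥ (M⁻¹ *ᵥ Vq (q t))))) t)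
    (hinit : μ (q 0) *ᵥ (M⁻¹ *ᵥ p 0) = 0) :
    ∃ K > (0 : ℝ), ∃ h₀ > (0 : ℝ), ∀ h : ℝ, 0 < h → h ≤ h₀ →
      ∀ Q P : ℕ → Fin n → ℝ,
        Q 0 = q 0 → P 0 = p 0 →
        (∀ k : ℕ, P (k + 1) = P k - h • Vq (Q k) -
          (2 : ℝ) • ((μ (Q k))ᵀ *ᵥ ((μ (Q k) * M⁻¹ * (μ (Q k))ᵀ)⁻¹ *ᵥ
            (μ (Q k) *ᵥ (M⁻¹ *ᵥ P k))))) →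
        (∀ k : ℕ, Q (k + 1) = Q k + h • (M⁻¹ *ᵥ P (k + 1))) →
        ∀ k : ℕ, (k : ℝ) * h ≤ T →
          ‖Q k - q ((k : ℝ) * h)‖ ≤ K * h := by
  have hCinv : ∀ a b, ContDiff ℝ 2 fun x => (μ x * M⁻¹ * (μ x)ᵀ)⁻¹ a b :=
    contDiff_inv_of_entries (contDiff_mul_of_entries
      (contDiff_mul_of_entries hμ fun _ _ => contDiff_const) fun a b => hμ b a) hC
  have hVq1 := contDiff_gradient hV hVq
  let W : (Fin n → ℝ) →L[ℝ] (Fin n → ℝ) := M⁻¹.mulVecLin.toContinuousLinearMap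
  let A : (Fin n → ℝ) → (Fin n → ℝ) →L[ℝ] (Fin n → ℝ) := fun x =>
    (constraintProj M (μ x)).mulVecLin.toContinuousLinearMap
  have hWa : ∀ y, W y = M⁻¹ *ᵥ y := fun _ => rfl
  have hAa : ∀ x y, A x y = constraintProj M (μ x) *ᵥ y := fun _ _ => rfl
  have hAe : ∀ x y, A x y = (μ x)ᵀ *ᵥ ((μ x * M⁻¹ * (μ x)ᵀ)⁻¹ *ᵥ (μ x *ᵥ (M⁻¹ *ᵥ y))) :=
    fun x y => by simp only [hAa, constraintProj, Matrix.mulVec_mulVec, Matrix.mul_assoc]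
  have hA : ContDiff ℝ 2 A := by
    rw [contDiff_clm_apply_iff]
    intro y
    simp only [hAe]
    exact contDiff_mulVec_of_entries (fun a b => hμ b a) (contDiff_mulVec_of_entries hCinv
      (contDiff_mulVec_of_entries hμ contDiff_const))
  let G : (Fin n → ℝ) × (Fin n → ℝ) → Fin n → ℝ := fun z =>
    (μ z.1)ᵀ *ᵥ ((μ z.1 * M⁻¹ * (μ z.1)ᵀ)⁻¹ *ᵥ
        ((fun a => ∑ i, fderiv ℝ (fun x => μ x a i) z.1 (M⁻¹ *ᵥ z.2) * (M⁻¹ *ᵥ z.2) i) -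
          μ z.1 *ᵥ (M⁻¹ *ᵥ Vq z.1)))
  have hμ1 : ∀ a i, ContDiff ℝ 1 fun z : (Fin n → ℝ) × (Fin n → ℝ) => μ z.1 a i :=
    fun a i => ((hμ a i).of_le (by norm_num)).comp contDiff_fst
  have hG : ContDiff ℝ 1 G := by
    have hWz : ContDiff ℝ 1 fun z : (Fin n → ℝ) × (Fin n → ℝ) => M⁻¹ *ᵥ z.2 :=
      W.contDiff.comp contDiff_snd
    refine contDiff_mulVec_of_entries (fun a b => hμ1 b a) (contDiff_mulVec_of_entries
      (fun a b => ((hCinv a b).of_le (by norm_num)).comp contDiff_fst) (ContDiff.sub ?_ ?_))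
    · rw [contDiff_pi]
      intro a
      refine ContDiff.sum fun i _ => ContDiff.mul (ContDiff.clm_apply ?_ hWz)
        (contDiff_pi.1 hWz i)
      exact ((hμ a i).fderiv_right (m := 1) (by norm_num)).comp contDiff_fst
    · exact contDiff_mulVec_of_entries hμ1
        (W.contDiff.comp (hVq1.comp contDiff_fst))
  obtain ⟨N, c, hc, N_add, N_le, le_N, N_iso⟩ := exists_kinetic_norm hM
  have hcons := constraint_preserved hμ hC hT hq hp hinit
  obtain ⟨K, hK, h₀, hh₀, H⟩ := reflected_euler_convergent W hA hVq1 hG hc N_add N_le le_N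
    (fun x y => by rw [hAa, hAa, Matrix.mulVec_mulVec, constraintProj_idem (hC x)])
    (fun x y => by
      have := N_iso _ (reflection_isometry hMsymm (hC x)) y
      rwa [Matrix.sub_mulVec, Matrix.one_mulVec, Matrix.smul_mulVec] at this)
    hT hq hp
    (fun t ht => by rw [hAe, hcons t ht]; simp)
    (fun t ht => by
      rw [hAa, Matrix.mulVec_mulVec, constraintProj_mul_transpose (hC _)])
  refine ⟨K, hK, h₀, hh₀, fun h hh hhh₀ Q P hQ0 hP0 hP hQ => ?_⟩
  refine H h hh hhh₀ Q P hQ0 hP0 (fun k => ?_) hQ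
  rw [hAe]
  exact hP k
end

section
/- Let M be an invertible symmetric n×n real matrix, V : ℝⁿ → ℝ differentiable with gradient V_q, μ : ℝⁿ → ℝ^{m×n}, and h > 0. Suppose (q, p̃, λ̃), (q', p̃', λ̃'), (q'', p̃'', λ̃'') in ℝⁿ × ℝⁿ × ℝᵐ satisfy: (Euler B with time step −h) q' = q − h M⁻¹ p̃ − (h²/2) M⁻¹ V_q(q) − (h²/2) M⁻¹ μ(q)ᵀ λ̃; p̃' = p̃ + (h/2) V_q(q) + (h/2) μ(q)ᵀ λ̃ + (h/2) V_q(q') + (h/2) μ(q')ᵀ λ̃'; 0 = −μ(q) M⁻¹ p̃' + (h/2) μ(q) M⁻¹ V_q(q') + (h/2) μ(q) M⁻¹ μ(q)ᵀ λ̃ + (h/2) μ(q) M⁻¹ μ(q')ᵀ λ̃'; and (Euler A with time step h) q'' = q' + h M⁻¹ p̃' − (h²/2) M⁻¹ V_q(q') − (h²/2) M⁻¹ μ(q')ᵀ λ̃'; p̃'' = p̃' − (h/2) V_q(q') − (h/2) μ(q')ᵀ λ̃' − (h/2) V_q(q'') − (h/2) μ(q'')ᵀ λ̃''; 0 = μ(q'')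 M⁻¹ p̃' − (h/2) μ(q'') M⁻¹ V_q(q') − (h/2) μ(q'') M⁻¹ μ(q')ᵀ λ̃' − (h/2) μ(q'') M⁻¹ μ(q'')ᵀ λ̃''. If C(q) = μ(q) M⁻¹ μ(q)ᵀ is invertible, then q'' = q, p̃'' = p̃ and λ̃'' = λ̃; that is, the nonholonomic extensions of the Euler A and Euler B methods are adjoint methods of one another. -/
/-!
The Euler A step with time step `h` undoes the Euler B step with time step `-h`. Adding the two
position updates and eliminating `pt'` through the momentum update of Euler B gives `q'' = q`.
Both constraints then involve the same matrix `μ q`, and their sum is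
`(h / 2) C(q) (lt - lt'') = 0`, so invertibility of `C(q)` gives `lt'' = lt`. With these two
equalities, the momentum updates are inverse to each other.
-/

open Matrix

/-- The nonholonomic extensions of the Euler A and Euler B methods
are adjoint of one another: if `(q', p̃', λ̃')` is obtained from `(q, p̃, λ̃)` by
the Euler B method with time step `−h`, and `(q'', p̃'', λ̃'')` from
`(q', p̃', λ̃')` by the Euler A method with time step `h`, and
`C(q) = μ(q) M⁻¹ μ(q)ᵀ` is invertible, then `(q'', p̃'', λ̃'') = (q, p̃, λ̃)`. -/
theorem eulerA_eulerB_adjoint {n m : ℕ}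
    (M : Matrix (Fin n) (Fin n) ℝ) (hM : IsUnit M) (hMsymm : Mᵀ = M)
    (V : (Fin n → ℝ) → ℝ) (Vq : (Fin n → ℝ) → Fin n → ℝ)
    (hV : ∀ x, HasFDerivAt V (vecCLM (Vq x)) x)
    (μ : (Fin n → ℝ) → Matrix (Fin m) (Fin n) ℝ)
    (h : ℝ) (hh : 0 < h)
    (q pt : Fin n → ℝ) (lt : Fin m → ℝ)
    (q' pt' : Fin n → ℝ) (lt' : Fin m → ℝ)
    (q'' pt'' : Fin n → ℝ) (lt'' : Fin m → ℝ)
    -- Euler B with time step −h: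
    (hBq : q' = q - h • (M⁻¹ *ᵥ pt) - (h ^ 2 / 2) • (M⁻¹ *ᵥ Vq q)
        - (h ^ 2 / 2) • (M⁻¹ *ᵥ ((μ q)ᵀ *ᵥ lt)))
    (hBp : pt' = pt + (h / 2) • Vq q + (h / 2) • ((μ q)ᵀ *ᵥ lt)
        + (h / 2) • Vq q' + (h / 2) • ((μ q')ᵀ *ᵥ lt'))
    (hBc : 0 = -(μ q *ᵥ (M⁻¹ *ᵥ pt')) + (h / 2) • (μ q *ᵥ (M⁻¹ *ᵥ Vq q'))
        + (h / 2) • (μ q *ᵥ (M⁻¹ *ᵥ ((μ q)ᵀ *ᵥ lt)))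
        + (h / 2) • (μ q *ᵥ (M⁻¹ *ᵥ ((μ q')ᵀ *ᵥ lt'))))
    -- Euler A with time step h:
    (hAq : q'' = q' + h • (M⁻¹ *ᵥ pt') - (h ^ 2 / 2) • (M⁻¹ *ᵥ Vq q')
        - (h ^ 2 / 2) • (M⁻¹ *ᵥ ((μ q')ᵀ *ᵥ lt')))
    (hAp : pt'' = pt' - (h / 2) • Vq q' - (h / 2) • ((μ q')ᵀ *ᵥ lt')
        - (h / 2) • Vq q'' - (h / 2) • ((μ q'')ᵀ *ᵥ lt''))
    (hAc : 0 = μ q'' *ᵥ (M⁻¹ *ᵥ pt') - (h / 2) • (μ q'' *ᵥ (M⁻¹ *ᵥ Vq q'))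
        - (h / 2) • (μ q'' *ᵥ (M⁻¹ *ᵥ ((μ q')ᵀ *ᵥ lt')))
        - (h / 2) • (μ q'' *ᵥ (M⁻¹ *ᵥ ((μ q'')ᵀ *ᵥ lt''))))
    (hC : IsUnit (μ q * M⁻¹ * (μ q)ᵀ)) :
    q'' = q ∧ pt'' = pt ∧ lt'' = lt := by
  -- Insert the momentum update, multiplied by `M⁻¹`, into the sum of the two position updates.
  have hMp := congrArg (M⁻¹ *ᵥ ·) hBp
  simp only [mulVec_add, mulVec_smul] at hMp
  have hq : q'' = q := by
    linear_combination (norm := module) hAq + hBq + h • hMp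
  rw [hq] at hAp hAc
  -- With `q'' = q`, the sum of the two constraints reads `(h / 2) C(q) (λ̃ - λ̃'') = 0`.
  have hl : lt'' = lt := by
    have hC' : (h / 2) • ((μ q * M⁻¹ * (μ q)ᵀ) *ᵥ lt'')
        = (h / 2) • ((μ q * M⁻¹ * (μ q)ᵀ) *ᵥ lt) := by
      simp only [← mulVec_mulVec]
      linear_combination (norm := module) hAc + hBc
    exact mulVec_injective_of_isUnit hC (smul_right_injective _ (half_pos hh).ne' hC')
  rw [hl] at hAp
  refine ⟨hq, ?_, hl⟩
  linear_combination (norm := module) hAp + hBp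
end

section
/- Let M be an invertible symmetric n×n real matrix, V : ℝⁿ → ℝ differentiable with gradient V_q, μ : ℝⁿ → ℝ^{m×n}, and h > 0. Define the discrete Lagrangian L_d^A(x, y) = h · ( (1/2)·((y−x)/h)ᵀ M ((y−x)/h) − V(x) ). Then for q_{k−1}, q_k, q_{k+1} ∈ ℝⁿ and λ ∈ ℝᵐ, the GNI equations D₁L_d^A(q_k, q_{k+1}) + D₂L_d^A(q_{k−1}, q_k) = μ(q_k)ᵀ λ and μ(q_k) M⁻¹ ( D₁L_d^A(q_k, q_{k+1}) − D₂L_d^A(q_{k−1}, q_k) ) = 0 hold if and only if, with λ̃ = λ/h, the nonholonomic Euler A scheme holds: q_{k+1} − 2q_k + q_{k−1} = −h² M⁻¹ ( V_q(q_k) + μ(q_k)ᵀ λ̃ ) and μ(q_k) ( (q_{k+1} − q_{k−1})/(2h) + (h/2) M⁻¹ V_q(q_k) ) = 0. -/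
/-!
Since `M` is symmetric, the quadratic form `z ↦ zᵀ M z` has gradient `2 M z`. By uniqueness of
derivatives this forces `D₁L_d(q_k, q_{k+1}) = -(1/h) M (q_{k+1} - q_k) - h V_q(q_k)` and
`D₂L_d(q_{k-1}, q_k) = (1/h) M (q_k - q_{k-1})`. Multiplication by `M⁻¹` then turns the sum of the two
gradients into `-(1/h) (q_{k+1} - 2 q_k + q_{k-1}) - h M⁻¹ V_q(q_k)` and their difference into `-2` times
the vector annihilated by `μ(q_k)` in the Euler A scheme, so the two equations match one by one.
-/

open Matrix

lemma vecCLM_apply {n : ℕ} (w v : Fin n → ℝ) : vecCLM w v = w ⬝ᵥ v := by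
  simp [vecCLM, dotProduct]

lemma vecCLM_injective {n : ℕ} : Function.Injective (vecCLM (n := n)) := by
  intro a b hab
  ext i
  simpa [vecCLM_apply] using DFunLike.congr_fun hab (Pi.single i 1)

/-- The gradient of `z ↦ (z - c)ᵀ M (z - c)` is `2 M (z - c)` for symmetric `M`. -/
lemma hasFDerivAt_quadratic {n : ℕ} (M : Matrix (Fin n) (Fin n) ℝ) (hMsymm : Mᵀ = M)
    (c z : Fin n → ℝ) :
    HasFDerivAt (fun x => (x - c) ⬝ᵥ M *ᵥ (x - c)) (vecCLM ((2 : ℝ) • M *ᵥ (z - c))) z := by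
  have hid : HasFDerivAt (fun x : Fin n → ℝ => x - c) (ContinuousLinearMap.id ℝ _) z :=
    (hasFDerivAt_id z).sub_const c
  have hMz := (M.mulVecLin.toContinuousLinearMap.hasFDerivAt (x := z - c)).comp z hid
  have key := HasFDerivAt.fun_sum (u := Finset.univ) fun i _ =>
    ((hasFDerivAt_pi'.1 hid) i).mul ((hasFDerivAt_pi'.1 hMz) i)
  refine key.congr_fderiv ?_
  ext v
  have hsymm : (z - c) ⬝ᵥ M *ᵥ v = M *ᵥ (z - c) ⬝ᵥ v := by
    rw [dotProduct_mulVec, ← mulVec_transpose, hMsymm]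
  calc _ = (z - c) ⬝ᵥ M *ᵥ v + M *ᵥ (z - c) ⬝ᵥ v := by
        simp [dotProduct, Finset.sum_add_distrib]
    _ = _ := by rw [vecCLM_apply, hsymm, smul_dotProduct, smul_eq_mul]; ring

/-- For the discrete Lagrangian
`L_d^A(x,y) = h((1/2)((y−x)/h)ᵀ M ((y−x)/h) − V(x))`, the GNI equations
`D₁L_d^A(q_k,q_{k+1}) + D₂L_d^A(q_{k−1},q_k) = μ(q_k)ᵀλ` and
`μ(q_k) M⁻¹ (D₁L_d^A(q_k,q_{k+1}) − D₂L_d^A(q_{k−1},q_k)) = 0`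
hold iff, with `λ̃ = λ/h`, the nonholonomic Euler A scheme holds:
`q_{k+1} − 2q_k + q_{k−1} = −h² M⁻¹(V_q(q_k) + μ(q_k)ᵀλ̃)` and
`μ(q_k)((q_{k+1} − q_{k−1})/(2h) + (h/2) M⁻¹ V_q(q_k)) = 0`. -/
theorem gni_eulerA_scheme {n m : ℕ}
    (M : Matrix (Fin n) (Fin n) ℝ) (hM : IsUnit M) (hMsymm : Mᵀ = M)
    (V : (Fin n → ℝ) → ℝ) (Vq : (Fin n → ℝ) → Fin n → ℝ)
    (hV : ∀ x, HasFDerivAt V (vecCLM (Vq x)) x)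
    (μ : (Fin n → ℝ) → Matrix (Fin m) (Fin n) ℝ)
    (h : ℝ) (hh : 0 < h)
    (Ld : (Fin n → ℝ) → (Fin n → ℝ) → ℝ)
    (hLd : ∀ x y, Ld x y =
      h * ((1 / 2) * (((1 / h) • (y - x)) ⬝ᵥ M *ᵥ ((1 / h) • (y - x))) - V x))
    (q0 q1 q2 : Fin n → ℝ) (lam : Fin m → ℝ)
    (D1 D2 : Fin n → ℝ)
    (hD1 : HasFDerivAt (fun x => Ld x q2) (vecCLM D1) q1)
    (hD2 : HasFDerivAt (fun y => Ld q0 y) (vecCLM D2) q1) :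
    (D1 + D2 = (μ q1)ᵀ *ᵥ lam ∧ μ q1 *ᵥ (M⁻¹ *ᵥ (D1 - D2)) = 0) ↔
      (q2 - (2 : ℝ) • q1 + q0 =
          -(h ^ 2) • (M⁻¹ *ᵥ (Vq q1 + (μ q1)ᵀ *ᵥ (h⁻¹ • lam))) ∧
        μ q1 *ᵥ ((1 / (2 * h)) • (q2 - q0) + (h / 2) • (M⁻¹ *ᵥ Vq q1)) = 0) := by
  have hh0 : h ≠ 0 := hh.ne'
  have hdet : IsUnit M.det := (Matrix.isUnit_iff_isUnit_det M).1 hM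
  have hinv : ∀ v, M⁻¹ *ᵥ (M *ᵥ v) = v := fun v => by
    rw [mulVec_mulVec, nonsing_inv_mul M hdet, one_mulVec]
  have hinj : Function.Injective (M⁻¹ *ᵥ ·) := fun a b hab => by
    simpa [mulVec_mulVec, mul_nonsing_inv M hdet] using congrArg (M *ᵥ ·) hab
  have e1 : D1 = -(1 / h) • M *ᵥ (q2 - q1) - h • Vq q1 := by
    apply vecCLM_injective
    refine hD1.unique ?_
    have h1 := ((hasFDerivAt_quadratic M hMsymm q2 q1).const_mul (1 / (2 * h))).sub
      ((hV q1).const_mul h)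
    refine (h1.congr_of_eventuallyEq (.of_forall fun x => ?_)).congr_fderiv ?_
    · simp only [hLd, ← neg_sub x q2, smul_neg, mulVec_neg, neg_dotProduct_neg, mulVec_smul,
        smul_dotProduct, dotProduct_smul, smul_eq_mul, Pi.sub_apply]
      field_simp
    · ext v
      simp only [← neg_sub q1 q2, mulVec_neg, vecCLM_apply, _root_.sub_apply,
        _root_.smul_apply, smul_dotProduct, sub_dotProduct, neg_dotProduct,
        smul_eq_mul]
      field_simp
  have e2 : D2 = (1 / h) • M *ᵥ (q1 - q0) := by
    apply vecCLM_injective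
    refine hD2.unique ?_
    have h1 := ((hasFDerivAt_quadratic M hMsymm q0 q1).const_mul (1 / (2 * h))).sub_const
      (h * V q0)
    refine (h1.congr_of_eventuallyEq (.of_forall fun x => ?_)).congr_fderiv ?_
    · simp only [hLd, mulVec_smul, smul_dotProduct, dotProduct_smul, smul_eq_mul]
      field_simp
    · ext v
      simp only [vecCLM_apply, _root_.smul_apply, smul_dotProduct, smul_eq_mul]
      field_simp
  refine and_congr ?_ ?_
  · rw [← hinj.eq_iff]
    simp only [e1, e2, mulVec_add, mulVec_sub, mulVec_smul, hinv]
    simp only [funext_iff, Pi.add_apply, Pi.sub_apply, Pi.smul_apply, smul_eq_mul]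
    refine forall_congr' fun i => ?_
    constructor
    · intro H
      rw [← H]
      field_simp
      ring
    · intro H
      field_simp at H ⊢
      linarith
  · have hdiff : M⁻¹ *ᵥ (D1 - D2) =
        (-2 : ℝ) • ((1 / (2 * h)) • (q2 - q0) + (h / 2) • (M⁻¹ *ᵥ Vq q1)) := by
      simp only [e1, e2, mulVec_sub, mulVec_smul, hinv]
      ext i
      simp only [Pi.add_apply, Pi.sub_apply, Pi.smul_apply, smul_eq_mul]
      field_simp
      ring
    rw [hdiff, mulVec_smul, smul_eq_zero_iff_right (by norm_num)]
end

section
/- Let M be an invertible symmetric n×n real matrix, V : ℝⁿ → ℝ differentiable with gradient V_q, μ : ℝⁿ → ℝ^{m×n}, Y : ℝⁿ → ℝⁿ, Π(q) = M·Y(q), and h > 0. Let (q_k)_{k∈ℤ} be a sequence in ℝⁿ and (λ̃_k)_{k∈ℤ} a sequence in ℝᵐ, and define p̃_k = M (q_{k+1} − q_{k−1})/(2h) and p_{k+1/2} = M (q_{k+1} − q_k)/h. Then the affine SHAKE equations q_{k+1} − 2q_k + q_{k−1} = −h² M⁻¹ ( V_q(q_k) + μ(q_k)ᵀ λ̃_k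 ) and μ(q_k)( (q_{k+1} − q_{k−1})/(2h) − Y(q_k) ) = 0 hold for all k if and only if the affine RATTLE equations hold for all k: p_{k+1/2} = p̃_k − (h/2)( V_q(q_k) + μ(q_k)ᵀ λ̃_k ); q_{k+1} = q_k + h M⁻¹ p_{k+1/2}; μ(q_k) M⁻¹ ( p̃_k − Π(q_k) ) = 0; p̃_{k+1} = p_{k+1/2} − (h/2)( V_q(q_{k+1}) + μ(q_{k+1})ᵀ λ̃_{k+1} ); and μ(q_{k+1}) M⁻¹ ( p̃_{k+1} − Π(q_{k+1}) ) = 0. -/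
/-!
Write `F k = V_q(q_k) + μ(q_k)ᵀ λ_k` and `D k = q_{k+1} − 2 q_k + q_{k−1}`. By the definitions of the
momenta, `p_{k+1/2} − p̃_k = M D k / (2h)` and `p̃_k − p_{k−1/2} = M D k / (2h)` as well, so each of the two
RATTLE momentum updates is the SHAKE equation `D k = −h² M⁻¹ F k` multiplied by `M / (2h)`, at the
index `k` for the first update and `k + 1` for the second. The position update is the definition of
`p_{k+1/2}`, and `M⁻¹ (p̃_k − M Y) = (q_{k+1} − q_{k−1})/(2h) − Y` identifies the constraints.
-/

open Matrix

/-- An equation solved for `d` with `M⁻¹` is the same as one multiplied by `M / (2h)`; here `d` is the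
second difference of positions and `F` the total force. -/
lemma secondDiff_eq_iff {n : ℕ} {M : Matrix (Fin n) (Fin n) ℝ} (hM : IsUnit M) {h : ℝ}
    (hh : 0 < h) (d F : Fin n → ℝ) :
    d = -(h ^ 2) • (M⁻¹ *ᵥ F) ↔ (1 / (2 * h)) • (M *ᵥ d) = -((h / 2) • F) := by
  have hdet : IsUnit M.det := (Matrix.isUnit_iff_isUnit_det M).1 hM
  have hne : h ≠ 0 := hh.ne'
  constructor
  · intro e
    rw [e, mulVec_smul, mulVec_mulVec, Matrix.mul_nonsing_inv M hdet, one_mulVec, smul_smul,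
      ← neg_smul]
    congr 1
    field_simp
  · intro e
    have e2 : M *ᵥ d = -(h ^ 2) • F := by
      have := congrArg (fun v => (2 * h) • v) e
      simp only [smul_smul, ← neg_smul] at this
      rw [mul_one_div_cancel (by positivity), one_smul] at this
      rw [this]
      congr 1
      ring
    rw [← mulVec_smul, ← e2, mulVec_mulVec, Matrix.nonsing_inv_mul M hdet, one_mulVec]

/-- With `p̃_k = M(q_{k+1} − q_{k−1})/(2h)` and
`p_{k+1/2} = M(q_{k+1} − q_k)/h`, and `Π(q) = M·Y(q)`, the affine SHAKE
equations hold for all `k` iff the affine RATTLE equations hold for all `k`. -/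
theorem affine_shake_iff_rattle {n m : ℕ}
    (M : Matrix (Fin n) (Fin n) ℝ) (hM : IsUnit M) (hMsymm : Mᵀ = M)
    (V : (Fin n → ℝ) → ℝ) (Vq : (Fin n → ℝ) → Fin n → ℝ)
    (hV : ∀ x, HasFDerivAt V (vecCLM (Vq x)) x)
    (μ : (Fin n → ℝ) → Matrix (Fin m) (Fin n) ℝ)
    (Y : (Fin n → ℝ) → Fin n → ℝ)
    (h : ℝ) (hh : 0 < h)
    (q : ℤ → Fin n → ℝ) (lam : ℤ → Fin m → ℝ)
    (pt ph : ℤ → Fin n → ℝ)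
    (hpt : ∀ k, pt k = (1 / (2 * h)) • (M *ᵥ (q (k + 1) - q (k - 1))))
    (hph : ∀ k, ph k = (1 / h) • (M *ᵥ (q (k + 1) - q k))) :
    -- affine SHAKE
    (∀ k : ℤ,
        q (k + 1) - (2 : ℝ) • q k + q (k - 1) =
            -(h ^ 2) • (M⁻¹ *ᵥ (Vq (q k) + (μ (q k))ᵀ *ᵥ lam k)) ∧
          μ (q k) *ᵥ ((1 / (2 * h)) • (q (k + 1) - q (k - 1)) - Y (q k)) = 0) ↔
      -- affine RATTLE
      (∀ k : ℤ,
        ph k = pt k - (h / 2) • (Vq (q k) + (μ (q k))ᵀ *ᵥ lam k) ∧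
          q (k + 1) = q k + h • (M⁻¹ *ᵥ ph k) ∧
          μ (q k) *ᵥ (M⁻¹ *ᵥ (pt k - M *ᵥ Y (q k))) = 0 ∧
          pt (k + 1) =
            ph k - (h / 2) • (Vq (q (k + 1)) + (μ (q (k + 1)))ᵀ *ᵥ lam (k + 1)) ∧
          μ (q (k + 1)) *ᵥ (M⁻¹ *ᵥ (pt (k + 1) - M *ᵥ Y (q (k + 1)))) = 0) := by
  have hdet : IsUnit M.det := (Matrix.isUnit_iff_isUnit_det M).1 hM
  have hne : h ≠ 0 := hh.ne'
  have inv_mul : ∀ v : Fin n → ℝ, M⁻¹ *ᵥ (M *ᵥ v) = v := fun v => by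
    rw [mulVec_mulVec, Matrix.nonsing_inv_mul M hdet, one_mulVec]
  have first : ∀ k, ph k - pt k =
      (1 / (2 * h)) • (M *ᵥ (q (k + 1) - (2 : ℝ) • q k + q (k - 1))) := fun k => by
    rw [hpt, hph, ← mulVec_smul, ← mulVec_smul, ← mulVec_smul, ← mulVec_sub]
    congr 1
    ext i
    simp only [Pi.sub_apply, Pi.add_apply, Pi.smul_apply, smul_eq_mul]
    field_simp
    ring
  have second : ∀ k, pt (k + 1) - ph k =
      (1 / (2 * h)) • (M *ᵥ (q (k + 1 + 1) - (2 : ℝ) • q (k + 1) + q (k + 1 - 1))) := fun k => by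
    rw [hpt, hph, ← mulVec_smul, ← mulVec_smul, ← mulVec_smul, ← mulVec_sub, add_sub_cancel_right]
    congr 1
    ext i
    simp only [Pi.sub_apply, Pi.add_apply, Pi.smul_apply, smul_eq_mul]
    field_simp
    ring
  have position : ∀ k, q (k + 1) = q k + h • (M⁻¹ *ᵥ ph k) := fun k => by
    rw [hph, mulVec_smul, inv_mul, smul_smul, mul_one_div_cancel hne, one_smul, add_sub_cancel]
  have velocity : ∀ k, M⁻¹ *ᵥ (pt k - M *ᵥ Y (q k)) =
      (1 / (2 * h)) • (q (k + 1) - q (k - 1)) - Y (q k) := fun k => by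
    rw [hpt, mulVec_sub, mulVec_smul, inv_mul, inv_mul]
  simp only [secondDiff_eq_iff hM hh, velocity]
  constructor
  · intro H k
    refine ⟨?_, position k, (H k).2, ?_, (H (k + 1)).2⟩
    · rw [sub_eq_add_neg, ← (H k).1, ← first, add_sub_cancel]
    · rw [sub_eq_add_neg, ← (H (k + 1)).1, ← second, add_sub_cancel]
  · intro H k
    obtain ⟨h1, -, h3, -, -⟩ := H k
    refine ⟨?_, h3⟩
    rw [← first, h1, sub_sub_cancel_left]
end

section
/- Let M be an invertible n×n real matrix, φ : ℝⁿ × ℝⁿ → ℝⁿ continuously differentiable and globally Lipschitz, T > 0, and let (q(t), p(t)) be a C¹ solution on [0, T] of q̇ = M⁻¹ p, ṗ = φ(q, p). Then the scheme q_{k+1} = q_k + h M⁻¹ p_{k+1/2}, p_{k+1/2} = p_{k−1/2} + h φ(q_k, p_{k+1/2}) is globally first-order convergent: there exist constants K > 0 and h₀ > 0 such that for every 0 < h ≤ h₀, every sequence (q_k, p_{k+1/2}) satisfying the scheme with q_0 = q(0) and p_{−1/2} = p(0), and every integer k ≥ 0 with k·h ≤ T, one has ‖q_k − q(k·h)‖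 + ‖p_{k−1/2} − p(k·h)‖ ≤ K·h. -/
open Matrix

/-!
The proof is consistency plus stability. On the compact interval `[0, T]` both velocities are
bounded by some `C`, so `q` and `p` are `C`-Lipschitz there and substituting the exact solution
into one step of the scheme leaves a residual of size `O(h²)` (`one_step_residual`, applied to
each equation). With `B = Lip + ‖M⁻¹‖ + 1`, subtracting the scheme gives for the total error
`E k = ‖Q k - q (k h)‖ + ‖P k - p (k h)‖` the implicit recursion
`E (k+1) ≤ E k + hB (E k + E (k+1)) + hB · C h`. For `hB ≤ 1/2` this is a discrete Grönwall
inequality (`implicit_gronwall`), which yields `E k ≤ C h exp (4 B T)`.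
-/

/-- If the derivative of `f` stays within `ε` of a fixed vector `v` on `[s, s + h]`, then
`f (s + h)` is within `ε * h` of the linear extrapolation `f s + h • v`. -/
lemma one_step_residual {E : Type*} [NormedAddCommGroup E] [NormedSpace ℝ E]
    {f f' : ℝ → E} {v : E} {s h ε : ℝ} (hh : 0 ≤ h)
    (hf : ∀ t ∈ Set.Icc s (s + h), HasDerivAt f (f' t) t)
    (hε : ∀ t ∈ Set.Icc s (s + h), ‖f' t - v‖ ≤ ε) :
    ‖f (s + h) - f s - h • v‖ ≤ ε * h := by
  have key := (convex_Icc s (s + h)).norm_image_sub_le_of_norm_hasDerivWithin_le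
    (f := fun t => f t - t • v) (f' := fun t => f' t - v) (C := ε) (x := s) (y := s + h)
    (fun t ht => by
      have h1 := (hf t ht).sub ((hasDerivAt_id t).smul_const v)
      rw [one_smul] at h1
      exact h1.hasDerivWithinAt)
    hε ⟨le_rfl, by linarith⟩ ⟨by linarith, le_rfl⟩
  have e : f (s + h) - (s + h) • v - (f s - s • v) = f (s + h) - f s - h • v := by
    rw [add_smul]; abel
  have e2 : ‖s + h - s‖ = h := by rw [add_sub_cancel_left, Real.norm_of_nonneg hh]
  simp only [e, e2] at key
  exact key

lemma norm_add_smul_sub_le {E : Type*} [NormedAddCommGroup E] [NormedSpace ℝ E]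
    {a b c : E} {h β γ : ℝ} (hh : 0 ≤ h) (hb : ‖b‖ ≤ β) (hc : ‖c‖ ≤ γ) :
    ‖a + h • b - c‖ ≤ ‖a‖ + h * β + γ := by
  have h1 := norm_sub_le (a + h • b) c
  have h2 := norm_add_le a (h • b)
  rw [norm_smul, Real.norm_of_nonneg hh] at h2
  have h3 := mul_le_mul_of_nonneg_left hb hh
  linarith

/-- Discrete Grönwall inequality for the implicit recursion
`E (k+1) ≤ E k + x (E k + E (k+1)) + x D` with zero initial error. The factor `1 + 4x` bounds
`(1 + x) / (1 - x)` for `0 ≤ x ≤ 1/2`. -/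
lemma implicit_gronwall {E : ℕ → ℝ} {x D : ℝ} {N : ℕ} (hx0 : 0 ≤ x) (hx : x ≤ 1 / 2)
    (hD : 0 ≤ D) (h0 : E 0 = 0)
    (hE : ∀ k < N, E (k + 1) ≤ E k + x * (E k + E (k + 1)) + x * D) :
    ∀ k ≤ N, E k ≤ D * Real.exp (4 * x * k) := by
  have step : ∀ k ≤ N, E k ≤ D * ((1 + 4 * x) ^ k - 1) := by
    intro k
    induction k with
    | zero => intro _; simp [h0]
    | succ k ih =>
      intro hk
      have ih := ih (by omega)
      have hr := hE k (by omega)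
      have hpow : 1 ≤ (1 + 4 * x) ^ k := one_le_pow₀ (by linarith)
      rw [pow_succ]
      generalize (1 + 4 * x) ^ k = y at *
      have h1 : (1 - x) * E (k + 1) ≤ (1 + x) * (D * (y - 1)) + x * D := by
        have := mul_le_mul_of_nonneg_left ih (by linarith : 0 ≤ 1 + x)
        linarith
      have h2 : (1 + x) * (D * (y - 1)) + x * D ≤ (1 - x) * (D * (y * (1 + 4 * x) - 1)) := by
        have hy : 0 ≤ D * y := mul_nonneg hD (by linarith)
        have hxx : 0 ≤ x * (1 - 2 * x) := mul_nonneg hx0 (by linarith)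
        have h3 := mul_nonneg hy hxx
        have h4 := mul_nonneg hD hx0
        linarith
      exact le_of_mul_le_mul_left (h1.trans h2) (by linarith)
  intro k hk
  have h1 : (1 + 4 * x) ^ k ≤ Real.exp (4 * x * k) := by
    rw [mul_comm (4 * x), Real.exp_nat_mul]
    exact pow_le_pow_left₀ (by linarith) (by linarith [Real.add_one_le_exp (4 * x)]) k
  exact (step k hk).trans (mul_le_mul_of_nonneg_left (by linarith) hD)

/-- For the ODE `q̇ = M⁻¹p`, `ṗ = φ(q,p)` with `M` invertible and
`φ` continuously differentiable and globally Lipschitz, the scheme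
`q_{k+1} = q_k + h M⁻¹ p_{k+1/2}`, `p_{k+1/2} = p_{k−1/2} + h φ(q_k, p_{k+1/2})`
is globally first-order convergent on `[0,T]`. Here `P k` stands for
`p_{k−1/2}`, with `P 0 = p_{−1/2} = p(0)`. -/
theorem midpoint_momentum_scheme_first_order_convergent {n : ℕ}
    (M : Matrix (Fin n) (Fin n) ℝ) (hM : IsUnit M)
    (φ : (Fin n → ℝ) × (Fin n → ℝ) → Fin n → ℝ)
    (hφ : ContDiff ℝ 1 φ) (Lip : NNReal) (hLip : LipschitzWith Lip φ)
    (T : ℝ) (hT : 0 < T)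
    (q p : ℝ → Fin n → ℝ)
    (hq : ∀ t ∈ Set.Icc (0 : ℝ) T, HasDerivAt q (M⁻¹ *ᵥ p t) t)
    (hp : ∀ t ∈ Set.Icc (0 : ℝ) T, HasDerivAt p (φ (q t, p t)) t) :
    ∃ K > (0 : ℝ), ∃ h₀ > (0 : ℝ), ∀ h : ℝ, 0 < h → h ≤ h₀ →
      ∀ Q P : ℕ → Fin n → ℝ,
        Q 0 = q 0 → P 0 = p 0 →
        (∀ k : ℕ, P (k + 1) = P k + h • φ (Q k, P (k + 1))) →
        (∀ k : ℕ, Q (k + 1) = Q k + h • (M⁻¹ *ᵥ P (k + 1))) →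
        ∀ k : ℕ, (k : ℝ) * h ≤ T →
          ‖Q k - q ((k : ℝ) * h)‖ + ‖P k - p ((k : ℝ) * h)‖ ≤ K * h := by
  set A : (Fin n → ℝ) →L[ℝ] (Fin n → ℝ) := LinearMap.toContinuousLinearMap (M⁻¹).mulVecLin
  have hA : ∀ v, M⁻¹ *ᵥ v = A v := fun v => rfl
  simp only [hA] at hq ⊢
  have hqc : ContinuousOn q (Set.Icc 0 T) := fun t ht => (hq t ht).continuousAt.continuousWithinAt
  have hpc : ContinuousOn p (Set.Icc 0 T) := fun t ht => (hp t ht).continuousAt.continuousWithinAt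
  obtain ⟨C₁, hC₁⟩ := isCompact_Icc.exists_bound_of_continuousOn
    (A.continuous.comp_continuousOn hpc)
  obtain ⟨C₂, hC₂⟩ := isCompact_Icc.exists_bound_of_continuousOn
    (hφ.continuous.comp_continuousOn (hqc.prodMk hpc))
  obtain ⟨C, hC0, hCq, hCp⟩ : ∃ C > (0 : ℝ), (∀ t ∈ Set.Icc 0 T, ‖A (p t)‖ ≤ C) ∧
      ∀ t ∈ Set.Icc 0 T, ‖φ (q t, p t)‖ ≤ C :=
    ⟨max 1 (max C₁ C₂), by positivity, fun t ht => (hC₁ t ht).trans (by simp),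
      fun t ht => (hC₂ t ht).trans (by simp)⟩
  have hqL : ∀ s ∈ Set.Icc 0 T, ∀ t ∈ Set.Icc 0 T, ‖q t - q s‖ ≤ C * ‖t - s‖ :=
    fun s hs t ht => (convex_Icc 0 T).norm_image_sub_le_of_norm_hasDerivWithin_le
      (fun t ht => (hq t ht).hasDerivWithinAt) hCq hs ht
  have hpL : ∀ s ∈ Set.Icc 0 T, ∀ t ∈ Set.Icc 0 T, ‖p t - p s‖ ≤ C * ‖t - s‖ :=
    fun s hs t ht => (convex_Icc 0 T).norm_image_sub_le_of_norm_hasDerivWithin_le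
      (fun t ht => (hp t ht).hasDerivWithinAt) hCp hs ht
  have hL0 : (0 : ℝ) ≤ Lip := Lip.2
  have ha0 : 0 ≤ ‖A‖ := norm_nonneg A
  obtain ⟨B, hB⟩ : ∃ B : ℝ, B = Lip + ‖A‖ + 1 := ⟨_, rfl⟩
  have hB0 : 0 < B := by linarith
  refine ⟨C * Real.exp (4 * B * T), by positivity, 1 / (2 * B), by positivity, ?_⟩
  intro h hh hh0 Q P hQ0 hP0 hP hQ N hN
  have hx : h * B ≤ 1 / 2 := by
    rw [le_div_iff₀ (by positivity)] at hh0
    linarith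
  have main := implicit_gronwall (E := fun k : ℕ => ‖Q k - q (k * h)‖ + ‖P k - p (k * h)‖)
    (x := h * B) (D := C * h) (N := N) (by positivity) hx (by positivity)
    (by simp [hQ0, hP0]) ?_ N le_rfl
  · refine main.trans ?_
    have : Real.exp (4 * (h * B) * N) ≤ Real.exp (4 * B * T) := by
      apply Real.exp_le_exp.2
      have := mul_le_mul_of_nonneg_left hN (by positivity : 0 ≤ 4 * B)
      linarith
    have := mul_le_mul_of_nonneg_left this (by positivity : 0 ≤ C * h)
    linarith
  intro k hk
  have hs0 : 0 ≤ (k : ℝ) * h := by positivity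
  have hsT : (k : ℝ) * h + h ≤ T := by
    have : ((k : ℝ) + 1) ≤ N := by exact_mod_cast hk
    nlinarith
  have hcast : ((k + 1 : ℕ) : ℝ) * h = k * h + h := by push_cast; ring
  simp only [hcast]
  generalize (k : ℝ) * h = s at *
  have hsub : ∀ t ∈ Set.Icc s (s + h), t ∈ Set.Icc 0 T :=
    fun t ht => ⟨hs0.trans ht.1, ht.2.trans hsT⟩
  have hsI := hsub s ⟨le_rfl, by linarith⟩
  have heI := hsub (s + h) ⟨by linarith, le_rfl⟩
  have hp_near : ∀ t ∈ Set.Icc s (s + h), ‖p t - p (s + h)‖ ≤ C * h := fun t ht =>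
    (hpL _ heI t (hsub t ht)).trans <| mul_le_mul_of_nonneg_left
      (by rw [Real.norm_eq_abs, abs_le]; constructor <;> linarith [ht.1, ht.2]) hC0.le
  have hq_near : ∀ t ∈ Set.Icc s (s + h), ‖q t - q s‖ ≤ C * h := fun t ht =>
    (hqL _ hsI t (hsub t ht)).trans <| mul_le_mul_of_nonneg_left
      (by rw [Real.norm_eq_abs, abs_le]; constructor <;> linarith [ht.1, ht.2]) hC0.le
  -- Consistency: both local residuals are of second order in `h`.
  have rp : ‖p (s + h) - p s - h • φ (q s, p (s + h))‖ ≤ Lip * (C * h) * h :=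
    one_step_residual hh.le (fun t ht => hp t (hsub t ht)) fun t ht =>
      (hLip.norm_sub_le _ _).trans <| mul_le_mul_of_nonneg_left
        (max_le (hq_near t ht) (hp_near t ht)) hL0
  have rq : ‖q (s + h) - q s - h • A (p (s + h))‖ ≤ ‖A‖ * (C * h) * h :=
    one_step_residual hh.le (fun t ht => hq t (hsub t ht)) fun t ht => by
      rw [← map_sub]
      exact (A.le_opNorm _).trans (mul_le_mul_of_nonneg_left (hp_near t ht) ha0)
  -- Stability: the scheme propagates the errors in a Lipschitz way.
  have ep : ‖P (k + 1) - p (s + h)‖ ≤ ‖P k - p s‖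
      + h * (Lip * (‖Q k - q s‖ + ‖P (k + 1) - p (s + h)‖)) + Lip * (C * h) * h := by
    have e : P (k + 1) - p (s + h) = (P k - p s)
        + h • (φ (Q k, P (k + 1)) - φ (q s, p (s + h)))
        - (p (s + h) - p s - h • φ (q s, p (s + h))) := by
      rw [smul_sub]
      nth_rewrite 1 [hP k]
      abel
    have l : ‖φ (Q k, P (k + 1)) - φ (q s, p (s + h))‖
        ≤ Lip * (‖Q k - q s‖ + ‖P (k + 1) - p (s + h)‖) :=
      (hLip.norm_sub_le _ _).trans <| mul_le_mul_of_nonneg_left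
        (max_le_add_of_nonneg (norm_nonneg _) (norm_nonneg _)) hL0
    exact (congrArg norm e).trans_le (norm_add_smul_sub_le hh.le l rp)
  have eq : ‖Q (k + 1) - q (s + h)‖ ≤ ‖Q k - q s‖
      + h * (‖A‖ * ‖P (k + 1) - p (s + h)‖) + ‖A‖ * (C * h) * h := by
    have e : Q (k + 1) - q (s + h) = (Q k - q s)
        + h • A (P (k + 1) - p (s + h)) - (q (s + h) - q s - h • A (p (s + h))) := by
      rw [map_sub, smul_sub, hQ k]
      abel
    exact (congrArg norm e).trans_le (norm_add_smul_sub_le hh.le (A.le_opNorm _) rq)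
  have nQ := norm_nonneg (Q k - q s)
  have nP := norm_nonneg (P k - p s)
  have nQ₁ := norm_nonneg (Q (k + 1) - q (s + h))
  have nP₁ := norm_nonneg (P (k + 1) - p (s + h))
  generalize ‖Q k - q s‖ = u at *
  generalize ‖P k - p s‖ = v at *
  generalize ‖Q (k + 1) - q (s + h)‖ = u₁ at *
  generalize ‖P (k + 1) - p (s + h)‖ = v₁ at *
  -- The sum of `ep` and `eq` falls short of the goal by the nonnegative terms below.
  have t1 : 0 ≤ h * ((‖A‖ + 1) * u) := by positivity
  have t2 : 0 ≤ h * (B * (v + u₁)) := by positivity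
  have t3 : 0 ≤ h * v₁ := by positivity
  have t4 : 0 ≤ h * (C * h) := by positivity
  rw [hB] at t2 ⊢
  linarith
end

section
/- Let τ be a map from n×n real matrices to n×n real matrices satisfying τ(x)·τ(−x) = 1 for all x, and suppose τ is differentiable at ξ and at −ξ. If ζ and η are n×n matrices with dτ_ξ(ζ) = η, then dτ_{−ξ}(ζ) = Ad_{τ(−ξ)} η = τ(−ξ)·η·τ(ξ). (This expresses the identity dτ_ξ⁻¹(η) = dτ_{−ξ}⁻¹( Ad_{τ(−ξ)} η ) relating the inverses of the right trivialized tangents at ξ and −ξ.) -/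
/-!
Differentiating the constant map `x ↦ τ x * τ (-x)` at `ξ` in the direction `ζ` gives
`Dτ(ξ)ζ · τ(-ξ) = τ(ξ) · Dτ(-ξ)ζ`, that is `η = τ(ξ) · Dτ(-ξ)ζ`. Multiplying by `τ(-ξ)` on the left
and by `τ(ξ)` on the right yields the claim, since `τ(-ξ) τ(ξ) = 1`.
-/

open Matrix

attribute [local instance] Matrix.normedAddCommGroup Matrix.normedSpace

/-- For a matrix retraction-type map `τ` (`τ(x)·τ(−x) = 1`),
differentiable at `ξ` and `−ξ`: if `dτ_ξ(ζ) = η` then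
`dτ_{−ξ}(ζ) = Ad_{τ(−ξ)} η = τ(−ξ)·η·τ(ξ)`, where `dτ_x(y) = (Dτ(x)·y)·τ(−x)`.
This expresses `dτ_ξ⁻¹(η) = dτ_{−ξ}⁻¹(Ad_{τ(−ξ)} η)`. -/
theorem retraction_dtau_inverse_Ad {n : ℕ}
    (τ : Matrix (Fin n) (Fin n) ℝ → Matrix (Fin n) (Fin n) ℝ)
    (hτ : ∀ x, τ x * τ (-x) = 1)
    (ξ : Matrix (Fin n) (Fin n) ℝ)
    (hξ : DifferentiableAt ℝ τ ξ) (hξ' : DifferentiableAt ℝ τ (-ξ))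
    (ζ η : Matrix (Fin n) (Fin n) ℝ)
    (hζ : fderiv ℝ τ ξ ζ * τ (-ξ) = η) :
    fderiv ℝ τ (-ξ) ζ * τ ξ = τ (-ξ) * η * τ ξ := by
  -- The entrywise sup norm is not submultiplicative, so the normed-algebra product rule does not
  -- apply; multiplication is treated as a continuous bilinear map in finite dimension.
  let B := (LinearMap.mul ℝ (Matrix (Fin n) (Fin n) ℝ)).toContinuousBilinearMap
  have hneg : HasFDerivAt (fun x => τ (-x))
      ((fderiv ℝ τ (-ξ)).comp (-ContinuousLinearMap.id ℝ (Matrix (Fin n) (Fin n) ℝ))) ξ :=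
    hξ'.hasFDerivAt.comp ξ (hasFDerivAt_id ξ).neg
  have hprod := B.hasFDerivAt_of_bilinear hξ.hasFDerivAt hneg
  have key : τ ξ * fderiv ℝ τ (-ξ) (-ζ) + fderiv ℝ τ ξ ζ * τ (-ξ) = 0 :=
    DFunLike.congr_fun (hprod.unique
      ((hasFDerivAt_const 1 ξ).congr_of_eventuallyEq (Filter.Eventually.of_forall hτ))) ζ
  have hη : η = τ ξ * fderiv ℝ τ (-ξ) ζ := by
    rw [hζ, map_neg, mul_neg, neg_add_eq_zero] at key
    exact key.symm
  have hinv : τ (-ξ) * τ ξ = 1 := by simpa using hτ (-ξ)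
  rw [hη, ← mul_assoc (τ (-ξ)), hinv, one_mul]
end

section
/- Let ω = (ω₁, ω₂, ω₃) ∈ ℝ³ and let ω̂ be its associated skew-symmetric 3×3 matrix under the hat map. Then the matrix 1 − ω̂/2 is invertible, and the Cayley transform of ω̂ is given explicitly by cay(ω̂) = (1 − ω̂/2)⁻¹(1 + ω̂/2) = I₃ + (4 / (4 + ‖ω‖²)) · ( ω̂ + ω̂²/2 ), where ‖ω‖² = ω₁² + ω₂² + ω₃² and I₃ is the 3×3 identity matrix. -/
/-!
Write `X = ω̂` and `n = ‖ω‖²`. By `hat_cube`, `X³ = -n X`, so expanding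
`(1 - X/2)(1 + c (X + X²/2))` leaves `1 - X/2 + c (1 + n/4) X`, which equals `1 + X/2` for
`c = 4 / (4 + n)`. The same identity exhibits an explicit inverse of `1 - X/2`.
-/

open Matrix

/-- The hat map sending `ω ∈ ℝ³` to the associated skew-symmetric 3×3 matrix. -/
def hat (ω : Fin 3 → ℝ) : Matrix (Fin 3) (Fin 3) ℝ :=
  !![0, -ω 2, ω 1; ω 2, 0, -ω 0; -ω 1, ω 0, 0]

/-- The Cayley–Hamilton relation `ω̂³ = -‖ω‖² ω̂`. -/
lemma hat_cube (ω : Fin 3 → ℝ) :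
    hat ω * (hat ω * hat ω) = -(ω 0 ^ 2 + ω 1 ^ 2 + ω 2 ^ 2) • hat ω := by
  ext i j
  fin_cases i <;> fin_cases j <;>
    simp [hat, Matrix.mul_apply, Fin.sum_univ_three] <;> ring

/-- For any `ω ∈ ℝ³`, the matrix `1 − ω̂/2` is invertible and the
Cayley transform of `ω̂` is
`cay(ω̂) = (1 − ω̂/2)⁻¹(1 + ω̂/2) = I₃ + (4/(4 + ‖ω‖²))(ω̂ + ω̂²/2)`. -/
theorem cayley_hat_formula (ω : Fin 3 → ℝ) :
    IsUnit (1 - (2⁻¹ : ℝ) • hat ω) ∧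
      (1 - (2⁻¹ : ℝ) • hat ω)⁻¹ * (1 + (2⁻¹ : ℝ) • hat ω) =
        1 + (4 / (4 + (ω 0 ^ 2 + ω 1 ^ 2 + ω 2 ^ 2))) •
          (hat ω + (2⁻¹ : ℝ) • (hat ω * hat ω)) := by
  set X := hat ω with hX
  set n := ω 0 ^ 2 + ω 1 ^ 2 + ω 2 ^ 2 with hn
  set R := 1 + (4 / (4 + n)) • (X + (2⁻¹ : ℝ) • (X * X)) with hR
  have hpos : 4 + n ≠ 0 := by positivity
  have hcube : X * (X * X) = -n • X := hat_cube ω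
  have key : (1 - (2⁻¹ : ℝ) • X) * R = 1 + (2⁻¹ : ℝ) • X := by
    simp only [hR, sub_mul, mul_add, one_mul, mul_one, smul_mul_assoc, mul_smul_comm, smul_add,
      hcube]
    match_scalars <;> field_simp <;> ring
  -- Since `1 - X/2` and `1 + X/2` add up to `2`, `(1 + R)/2` is a right inverse of `1 - X/2`.
  have hinv : (1 - (2⁻¹ : ℝ) • X) * ((2⁻¹ : ℝ) • (1 + R)) = 1 := by
    rw [mul_smul_comm, mul_add, key, mul_one]
    module
  have hunit : IsUnit (1 - (2⁻¹ : ℝ) • X) := IsUnit.of_mul_eq_one _ hinv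
  refine ⟨hunit, ?_⟩
  rw [← key, Matrix.nonsing_inv_mul_cancel_left _ _ ((Matrix.isUnit_iff_isUnit_det _).mp hunit)]
end

section
/- Let ω, y ∈ ℝ³ with associated skew-symmetric 3×3 matrices ω̂ and ŷ under the hat map. Then 1 − ω̂/2 and 1 + ω̂/2 are invertible and the right trivialized tangent of the Cayley map at ω̂ applied to ŷ satisfies (1 − ω̂/2)⁻¹ · ŷ · (1 + ω̂/2)⁻¹ = hat( (2 / (4 + ‖ω‖²)) · ( 2·y + ω × y ) ), i.e. under the hat identification d cay_ω is represented by the 3×3 matrix (2/(4 + ‖ω‖²))(2·I₃ + ω̂), where ‖ω‖² = ω₁² + ω₂² + ω₃² and × is the cross product on ℝ³. -/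
/-!
Both matrices `1 ± ω̂/2` have determinant `1 + ‖ω‖²/4 > 0`, hence are invertible. With
`v = (2/(4 + ‖ω‖²)) (2y + ω × y)`, the formula is therefore equivalent to
`(1 - ω̂/2) v̂ (1 + ω̂/2) = ŷ`. The left side is `hat (v - (ω × v)/2 + (ω · v) ω/4)`, because
`[ω̂, v̂] = hat (ω × v)` and `ω̂ v̂ ω̂ = -(ω · v) ω̂`, and the triple product expansion of
`ω × (ω × y)` reduces it to `ŷ`. The lemma `one_sub_mul_hat_mul_one_add` checks this identity
entrywise.
-/

open Matrix

lemma det_one_add_smul_hat (ω : Fin 3 → ℝ) (t : ℝ) :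
    (1 + t • hat ω).det = 1 + t ^ 2 * (ω 0 ^ 2 + ω 1 ^ 2 + ω 2 ^ 2) := by
  simp [hat, Matrix.det_fin_three]
  ring

lemma isUnit_one_add_smul_hat (ω : Fin 3 → ℝ) (t : ℝ) : IsUnit (1 + t • hat ω) := by
  rw [Matrix.isUnit_iff_isUnit_det, det_one_add_smul_hat, isUnit_iff_ne_zero]
  positivity

/-- The asserted value of `(1 - ω̂/2)⁻¹ ŷ (1 + ω̂/2)⁻¹`, with the inverses cleared. -/
lemma one_sub_mul_hat_mul_one_add (ω y : Fin 3 → ℝ) :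
    (1 - (2⁻¹ : ℝ) • hat ω) *
        hat ((2 / (4 + (ω 0 ^ 2 + ω 1 ^ 2 + ω 2 ^ 2))) • ((2 : ℝ) • y + crossProduct ω y)) *
        (1 + (2⁻¹ : ℝ) • hat ω) = hat y := by
  have h : 4 + (ω 0 ^ 2 + ω 1 ^ 2 + ω 2 ^ 2) ≠ 0 := by positivity
  ext i j
  fin_cases i <;> fin_cases j <;>
    simp [hat, Matrix.mul_apply, Fin.sum_univ_three, Matrix.one_apply, cross_apply,
      Matrix.vecHead, Matrix.vecTail] <;>
    field_simp <;> ring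

/-- For `ω, y ∈ ℝ³`, the matrices `1 ± ω̂/2` are invertible and the
right trivialized tangent of the Cayley map at `ω̂` applied to `ŷ` satisfies
`(1 − ω̂/2)⁻¹ ŷ (1 + ω̂/2)⁻¹ = hat((2/(4 + ‖ω‖²))(2y + ω × y))`; i.e. under the
hat identification `d cay_ω` is represented by the matrix
`(2/(4 + ‖ω‖²))(2 I₃ + ω̂)`. -/
theorem cayley_dtau_hat_formula (ω y : Fin 3 → ℝ) :
    IsUnit (1 - (2⁻¹ : ℝ) • hat ω) ∧ IsUnit (1 + (2⁻¹ : ℝ) • hat ω) ∧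
      (1 - (2⁻¹ : ℝ) • hat ω)⁻¹ * hat y * (1 + (2⁻¹ : ℝ) • hat ω)⁻¹ =
        hat ((2 / (4 + (ω 0 ^ 2 + ω 1 ^ 2 + ω 2 ^ 2))) •
          ((2 : ℝ) • y + crossProduct ω y)) ∧
      (2 / (4 + (ω 0 ^ 2 + ω 1 ^ 2 + ω 2 ^ 2))) •
          ((2 : ℝ) • y + crossProduct ω y) =
        ((2 / (4 + (ω 0 ^ 2 + ω 1 ^ 2 + ω 2 ^ 2))) •
          ((2 : ℝ) • (1 : Matrix (Fin 3) (Fin 3) ℝ) + hat ω)) *ᵥ y := by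
  have hA : IsUnit (1 - (2⁻¹ : ℝ) • hat ω) := by
    simpa [sub_eq_add_neg] using isUnit_one_add_smul_hat ω (-2⁻¹)
  have hB : IsUnit (1 + (2⁻¹ : ℝ) • hat ω) := isUnit_one_add_smul_hat ω 2⁻¹
  refine ⟨hA, hB, ?_, ?_⟩
  · rw [Matrix.isUnit_iff_isUnit_det] at hA hB
    conv_lhs => rw [← one_sub_mul_hat_mul_one_add ω y]
    rw [Matrix.mul_assoc, Matrix.mul_nonsing_inv_cancel_right _ _ hB,
      Matrix.nonsing_inv_mul_cancel_left _ _ hA]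
  · ext i
    fin_cases i <;>
      simp [hat, Matrix.mulVec, dotProduct, Fin.sum_univ_three, Matrix.one_apply, cross_apply,
      Matrix.vecHead, Matrix.vecTail] <;>
      ring
end

section
/- Let ω, y ∈ ℝ³ with associated skew-symmetric 3×3 matrices ω̂ and ŷ under the hat map. Then (1 − ω̂/2) · ŷ · (1 + ω̂/2) = hat( y − (ω × y)/2 + ((ω·y)/4)·ω ), i.e. under the hat identification the inverse right trivialized tangent of the Cayley map d cay_ω⁻¹ is represented by the 3×3 matrix I₃ − ω̂/2 + (ω ωᵀ)/4, where ω·y denotes the Euclidean inner product and × the cross product on ℝ³. -/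
/-!
Expanding the product gives `ŷ - [ω̂, ŷ]/2 - ω̂ŷω̂/4`. The hat map turns the commutator into
the cross product, and `ω̂ŷω̂ = -(ω·y) ω̂`, which yields the vector formula; the matrix form
follows from `ω̂ y = ω × y` and `(ωωᵀ) y = (ω·y) ω`. Since everything is polynomial in the six
coordinates, both identities are verified entrywise.
-/

open Matrix

/-- For `ω, y ∈ ℝ³`,
`(1 − ω̂/2)·ŷ·(1 + ω̂/2) = hat(y − (ω × y)/2 + ((ω·y)/4)ω)`; i.e. under the hat
identification the inverse right trivialized tangent of the Cayley map
`d cay_ω⁻¹` is represented by the matrix `I₃ − ω̂/2 + ω ωᵀ/4`. -/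
theorem cayley_inv_dtau_hat_formula (ω y : Fin 3 → ℝ) :
    (1 - (2⁻¹ : ℝ) • hat ω) * hat y * (1 + (2⁻¹ : ℝ) • hat ω) =
        hat (y - (2⁻¹ : ℝ) • crossProduct ω y + ((ω ⬝ᵥ y) / 4) • ω) ∧
      y - (2⁻¹ : ℝ) • crossProduct ω y + ((ω ⬝ᵥ y) / 4) • ω =
        (1 - (2⁻¹ : ℝ) • hat ω + (4⁻¹ : ℝ) • vecMulVec ω ω) *ᵥ y := by
  refine ⟨?_, ?_⟩
  · ext i j
    fin_cases i <;> fin_cases j <;>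
      simp [hat, Matrix.mul_apply, Fin.sum_univ_three, cross_apply, dotProduct,
        vecHead, vecTail] <;> ring
  · ext i
    fin_cases i <;>
      simp [hat, Matrix.mulVec, Fin.sum_univ_three, cross_apply, dotProduct, vecMulVec_apply,
        vecHead, vecTail] <;>
      ring
end
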